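/- Let r : [0,1]² → (0,1) be a graphon with log r, log(1−r) ∈ L¹([0,1]²), and let (r_N) be block graphons satisfying the stated convergence assumptions. Let β ∈ [0, C_r] with C_r = ‖L_r‖, and let h be a graphon with ‖L_h‖ < β. Then liminf_{N→∞} (2/N²) log P_N(‖L_{h^{G_N}}‖ < β) ≥ − I_r(h), where h^{G_N} is the empirical graphon of the inhomogeneous Erdős–Rényi random graph G_N with reference graphon r_N. -/

import Mathlib

/-!
The lower bound is obtained by tilting. Let `q` be the matrix of averages of `h` over the blocks
(with the diagonal set to zero), and compare the given law with the law `Q_N` of the random graph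
with edge probabilities `q`. For the event `E` that the Laplacian norm is below `β`, the log-sum
inequality gives (`change_of_measure`)

  `log P_N(E) ≥ log Q_N(E) - (H_N + 1) / Q_N(E)`,

where `H_N` is the relative entropy of the two product laws. This needs no concentration of the
log-likelihood ratio, only `Q_N(E) → 1` and a bound on `H_N`.

* Entropy. By Jensen's inequality on each block, `2 H_N ≤ N ^ 2 * I_{r_N}(h)` (`entropy_le`), and
  `I_{r_N}(h) → I_r(h)` because `log r_N` and `log (1 - r_N)` converge in `L¹` (`tendsto_Ir`).

* Concentration. Write `M` for the adjacency matrix minus `q`. Under `Q_N`, a Chernoff bound keeps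
  all row sums of `M` below `ε N`, and a second moment estimate of the entries of `M ^ 2`, where
  distinct paths of length two between distinct ends are uncorrelated, gives
  `‖M‖ ≤ ‖M ^ 2‖_HS ^ (1/2) ≤ ε N`; both hold with probability tending to one (`prob_good`).

* Norm. The Laplacian is symmetric and nonnegative, so its norm is governed by its Dirichlet form.
  On step functions the Dirichlet form of `h` is that of `q`, hence the latter is at most
  `‖L_h‖ N` (`dirichlet_blkAvg`). Adding `M` changes it by at most `2 ε N` (`dirichlet_perturb`).
  Finally the operator of an empirical graphon acts as the Laplacian matrix on step functions and
  multiplies by the degrees on functions with vanishing block means, and the degrees are bounded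
  by the Dirichlet form too (`lapNorm_empGraphon_le`, `row_le_of_dirichlet`). Thus the Laplacian
  norm is at most `‖L_h‖ + 3 ε < β` on this event (`lapNorm_le_of_good`).
-/

open MeasureTheory Filter Set
open scoped BigOperators

noncomputable section

/-- The unit interval `[0,1] ⊆ ℝ`. -/
def UI : Set ℝ := Set.Icc 0 1

/-- A graphon: a symmetric measurable function with values in `[0,1]`. -/
def IsGraphon (f : ℝ → ℝ → ℝ) : Prop :=
  (∀ x y, f x y = f y x) ∧ Measurable (Function.uncurry f) ∧
    ∀ x y, f x y ∈ Set.Icc (0 : ℝ) 1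

/-- Membership in `L²([0,1])`. -/
def MemL2 (u : ℝ → ℝ) : Prop :=
  Measurable u ∧ IntegrableOn (fun x => u x ^ 2) UI

/-- The `L²([0,1])`-norm. -/
def l2 (u : ℝ → ℝ) : ℝ := (∫ x in UI, u x ^ 2) ^ (1/2 : ℝ)

/-- The Laplacian graphon operator applied to `u`. -/
def lapApply (f : ℝ → ℝ → ℝ) (u : ℝ → ℝ) (x : ℝ) : ℝ :=
  ∫ y in UI, f x y * (u x - u y)

/-- The operator norm of the Laplacian graphon operator. -/
def lapNorm (f : ℝ → ℝ → ℝ) : ℝ :=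
  sSup {c | ∃ u : ℝ → ℝ, MemL2 u ∧ l2 u = 1 ∧ c = l2 (lapApply f u)}

/-- The degree function of a graphon. -/
def degFun (f : ℝ → ℝ → ℝ) (x : ℝ) : ℝ := ∫ y in UI, f x y

/-- The essential supremum of the degree function. -/
def degSup (f : ℝ → ℝ → ℝ) : ℝ := essSup (degFun f) (volume.restrict UI)

/-- Bernoulli relative entropy `R(a|b)`. -/
def relEnt (a b : ℝ) : ℝ :=
  a * Real.log (a / b) + (1 - a) * Real.log ((1 - a) / (1 - b))

/-- The relative entropy functional `I_r(h)`. -/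
def Ir (r h : ℝ → ℝ → ℝ) : ℝ :=
  ∫ p in UI ×ˢ UI, relEnt (h p.1 p.2) (r p.1 p.2)

/-- The downward rate function `ψ_r`. -/
def psiLow (r : ℝ → ℝ → ℝ) (β : ℝ) : ℝ :=
  sInf {c | ∃ h, IsGraphon h ∧ lapNorm h ≤ β ∧ c = Ir r h}

/-- A Lebesgue-measure-preserving bijection of `[0,1]`. -/
structure MPB where
  toFun : ℝ → ℝ
  bijOn : Set.BijOn toFun UI UI
  measurePreserving :
    MeasurePreserving toFun (volume.restrict UI) (volume.restrict UI)

/-- The cut distance `d_□`. -/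
def cutDist (f g : ℝ → ℝ → ℝ) : ℝ :=
  sSup {c | ∃ S T : Set ℝ, MeasurableSet S ∧ MeasurableSet T ∧ S ⊆ UI ∧ T ⊆ UI ∧
    c = |∫ x in S, ∫ y in T, (f x y - g x y)|}

/-- The cut metric `δ_□`. -/
def cutMetric (f g : ℝ → ℝ → ℝ) : ℝ :=
  sInf {c | ∃ φ : MPB, c = cutDist f (fun x y => g (φ.toFun x) (φ.toFun y))}

/-- The rate function `J_r` (infimum of `I_r` over relabelings). -/
def Jrate (r h : ℝ → ℝ → ℝ) : ℝ :=
  sInf {c | ∃ φ : MPB, c = Ir r (fun x y => h (φ.toFun x) (φ.toFun y))}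

/-- Open sets of graphons in the topology induced by the cut metric. -/
def CutOpen (O : Set (ℝ → ℝ → ℝ)) : Prop :=
  ∀ f ∈ O, ∃ ε > 0, ∀ g, IsGraphon g → cutMetric f g < ε → g ∈ O

/-- Closed sets of graphons in the topology induced by the cut metric. -/
def CutClosed (C : Set (ℝ → ℝ → ℝ)) : Prop :=
  ∀ f, IsGraphon f → f ∉ C → ∃ ε > 0, ∀ g, IsGraphon g → cutMetric f g < ε → g ∉ C

/-- Adjacency matrices of simple graphs on `N` vertices. -/
abbrev AdjMat (N : ℕ) :=
  {A : Fin N → Fin N → Bool // (∀ i j, A i j = A j i) ∧ ∀ i, A i i = false}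

/-- Probability weight of a configuration of the inhomogeneous ERRG. -/
def errgWeight (N : ℕ) (p : Fin N → Fin N → ℝ) (A : AdjMat N) : ℝ :=
  ∏ i : Fin N, ∏ j : Fin N,
    if i < j then (if A.1 i j then p i j else 1 - p i j) else 1

open Classical in
/-- The law of the inhomogeneous ERRG with edge probabilities `p`. -/
def errgProb (N : ℕ) (p : Fin N → Fin N → ℝ) (E : Set (AdjMat N)) : ℝ :=
  ∑ A : AdjMat N, if A ∈ E then errgWeight N p A else 0

/-- Degree of vertex `i`. -/
def degRG {N : ℕ} (A : AdjMat N) (i : Fin N) : ℝ :=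
  ∑ j : Fin N, if A.1 i j then (1 : ℝ) else 0

/-- The Laplacian matrix `L = D - A`. -/
def lapMat {N : ℕ} (A : AdjMat N) : Matrix (Fin N) (Fin N) ℝ :=
  fun i j => (if i = j then degRG A i else 0) - (if A.1 i j then 1 else 0)

/-- The largest eigenvalue of a matrix. -/
def lambdaMax {N : ℕ} (M : Matrix (Fin N) (Fin N) ℝ) : ℝ :=
  sSup {μ | ∃ v : Fin N → ℝ, v ≠ 0 ∧ M.mulVec v = μ • v}

/-- The spectral norm (largest absolute value of an eigenvalue) of a matrix. -/
def specNorm {N : ℕ} (M : Matrix (Fin N) (Fin N) ℝ) : ℝ :=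
  sSup {c | ∃ μ : ℝ, (∃ v : Fin N → ℝ, v ≠ 0 ∧ M.mulVec v = μ • v) ∧ c = |μ|}

/-- The `i`-th block of `[0,1]` divided into `N` blocks. -/
def blk (N : ℕ) (i : Fin N) : Set ℝ :=
  Set.Ico (((i : ℕ) : ℝ) / N) ((((i : ℕ) : ℝ) + 1) / N)

open Classical in
/-- The empirical graphon of a graph on `N` vertices. -/
def empGraphon (N : ℕ) (A : AdjMat N) (x y : ℝ) : ℝ :=
  if ∃ i j : Fin N, A.1 i j = true ∧ x ∈ blk N i ∧ y ∈ blk N j then 1 else 0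

/-- A function that is constant on the `N × N` blocks. -/
def IsBlockGraphon (N : ℕ) (f : ℝ → ℝ → ℝ) : Prop :=
  ∀ i j : Fin N, ∀ x₁ ∈ blk N i, ∀ x₂ ∈ blk N i, ∀ y₁ ∈ blk N j, ∀ y₂ ∈ blk N j,
    f x₁ y₁ = f x₂ y₂

/-- Edge probabilities induced by a block graphon. -/
def pOf (N : ℕ) (f : ℝ → ℝ → ℝ) (i j : Fin N) : ℝ :=
  f (((i : ℕ) : ℝ) / N) (((j : ℕ) : ℝ) / N)

/-- The cumulant generating function `Λ_r(x,θ)`. -/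
def Lam (r : ℝ → ℝ → ℝ) (x θ : ℝ) : ℝ :=
  ∫ y in UI, Real.log (r x y * Real.exp θ + 1 - r x y)

/-- The Legendre transform `J_r(x,β)`. -/
def Jfun (r : ℝ → ℝ → ℝ) (x β : ℝ) : ℝ :=
  ⨆ θ : ℝ, (θ * β - Lam r x θ)

/-- The upward rate function `ψ̂_r`. -/
def psiHat (r : ℝ → ℝ → ℝ) (β : ℝ) : ℝ :=
  ⨅ x : UI, Jfun r (x : ℝ) β

/-- The variance function `v_r`. -/
def vr (r : ℝ → ℝ → ℝ) (x : ℝ) : ℝ := ∫ y in UI, r x y * (1 - r x y)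

/-- The tilted kernel `r̂` (Cramér transform with parameter `θ`). -/
def tilt (r : ℝ → ℝ → ℝ) (θ x y : ℝ) : ℝ :=
  Real.exp θ * r x y / (Real.exp θ * r x y + 1 - r x y)

/-- The tilted mean degree. -/
def degMoment (r : ℝ → ℝ → ℝ) (x θ : ℝ) : ℝ := ∫ y in UI, tilt r θ x y

/-- Extended-real-valued logarithm with `log x = ⊥` for `x ≤ 0`. -/
def elog (x : ℝ) : EReal := if x ≤ 0 then ⊥ else ((Real.log x : ℝ) : EReal)

/-- Standing assumptions on the reference graphon. -/
def GraphonAssump (r : ℝ → ℝ → ℝ) : Prop :=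
  IsGraphon r ∧ (∀ x ∈ UI, ∀ y ∈ UI, r x y ∈ Set.Ioo (0:ℝ) 1) ∧
    IntegrableOn (fun p : ℝ × ℝ => Real.log (r p.1 p.2)) (UI ×ˢ UI) ∧
    IntegrableOn (fun p : ℝ × ℝ => Real.log (1 - r p.1 p.2)) (UI ×ˢ UI)

/-- Standing convergence assumptions on the block graphons `r_N`. -/
def SeqAssump (r : ℝ → ℝ → ℝ) (rN : ℕ → ℝ → ℝ → ℝ) : Prop :=
  (∀ N, IsGraphon (rN N)) ∧ (∀ N, IsBlockGraphon N (rN N)) ∧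
  (∀ N, ∀ x ∈ UI, ∀ y ∈ UI, rN N x y ∈ Set.Ioo (0:ℝ) 1) ∧
  (∀ᵐ p ∂(volume.restrict (UI ×ˢ UI)),
    Tendsto (fun N => rN N (p : ℝ × ℝ).1 p.2) atTop (nhds (r p.1 p.2))) ∧
  Tendsto (fun N => ∫ p in UI ×ˢ UI, |rN N p.1 p.2 - r p.1 p.2|) atTop (nhds 0) ∧
  Tendsto (fun N => ∫ p in UI ×ˢ UI,
    |Real.log (rN N p.1 p.2) - Real.log (r p.1 p.2)|) atTop (nhds 0) ∧
  Tendsto (fun N => ∫ p in UI ×ˢ UI,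
    |Real.log (1 - rN N p.1 p.2) - Real.log (1 - r p.1 p.2)|) atTop (nhds 0)

/-- A graphon bounded between `rm` and `rp`, `0 < rm ≤ rp < 1`. -/
def BoundedGraphon (r : ℝ → ℝ → ℝ) (rm rp : ℝ) : Prop :=
  IsGraphon r ∧ 0 < rm ∧ rm ≤ rp ∧ rp < 1 ∧
    ∀ x ∈ UI, ∀ y ∈ UI, rm ≤ r x y ∧ r x y ≤ rp

/-- Sup-norm convergence on `[0,1]²`. -/
def SupConv (r : ℝ → ℝ → ℝ) (rN : ℕ → ℝ → ℝ → ℝ) : Prop :=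
  ∀ ε > 0, ∃ N₀, ∀ N ≥ N₀, ∀ x ∈ UI, ∀ y ∈ UI, |rN N x y - r x y| ≤ ε

/-- Pointwise convergence on `[0,1]²`. -/
def PtConv (r : ℝ → ℝ → ℝ) (rN : ℕ → ℝ → ℝ → ℝ) : Prop :=
  ∀ x ∈ UI, ∀ y ∈ UI, Tendsto (fun N => rN N x y) atTop (nhds (r x y))

/-- Non-negative definiteness of a kernel. -/
def NonnegDef (r : ℝ → ℝ → ℝ) : Prop :=
  ∀ u : ℝ → ℝ, MemL2 u → 0 ≤ ∫ p in UI ×ˢ UI, r p.1 p.2 * u p.1 * u p.2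

/-- `μ` is an eigenvalue of the Laplacian operator `L_f` on `L²([0,1])`. -/
def lapEigen (f : ℝ → ℝ → ℝ) (μ : ℝ) : Prop :=
  ∃ u : ℝ → ℝ, MemL2 u ∧ (∫ x in UI, u x ^ 2) ≠ 0 ∧
    ∀ᵐ x ∂(volume.restrict UI), lapApply f u x = μ * u x

/-! ### Product Bernoulli measures -/

/-- The weight of `ω` under independent Bernoulli variables with parameters `q`. -/
def bw {ι : Type*} [Fintype ι] (q : ι → ℝ) (ω : ι → Bool) : ℝ :=
  ∏ e, if ω e then q e else 1 - q e

section Bernoulli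

variable {ι : Type*} [Fintype ι] [DecidableEq ι]

omit [DecidableEq ι] in
lemma bw_nonneg {q : ι → ℝ} (hq : ∀ e, q e ∈ Icc (0:ℝ) 1) (ω : ι → Bool) : 0 ≤ bw q ω := by
  refine Finset.prod_nonneg fun e _ => ?_
  have := hq e
  split_ifs
  · exact this.1
  · linarith [this.2]

omit [DecidableEq ι] in
lemma bw_pos {q : ι → ℝ} (hq : ∀ e, q e ∈ Ioo (0:ℝ) 1) (ω : ι → Bool) : 0 < bw q ω := by
  refine Finset.prod_pos fun e _ => ?_
  have := hq e
  split_ifs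
  · exact this.1
  · linarith [this.2]

/-- Independence: the expectation of a product of functions of the coordinates factorises. -/
lemma sum_bw_prod (q : ι → ℝ) (g : ι → Bool → ℝ) :
    ∑ ω, bw q ω * ∏ e, g e (ω e) = ∏ e, (q e * g e true + (1 - q e) * g e false) := by
  have h1 : ∀ e, q e * g e true + (1 - q e) * g e false
      = ∑ b : Bool, (if b then q e else 1 - q e) * g e b := by
    intro e; simp
  simp_rw [h1, bw, ← Finset.prod_mul_distrib]
  rw [Finset.prod_univ_sum, Fintype.piFinset_univ]

lemma sum_bw (q : ι → ℝ) : ∑ ω, bw q ω = 1 := by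
  have := sum_bw_prod q (fun _ _ => 1)
  simpa using this

lemma sum_bw_marginal (q : ι → ℝ) (e : ι) (f : Bool → ℝ) :
    ∑ ω, bw q ω * f (ω e) = q e * f true + (1 - q e) * f false := by
  have := sum_bw_prod q (fun e' b => if e' = e then f b else 1)
  have h2 : ∀ ω : ι → Bool, (∏ e', if e' = e then f (ω e') else 1) = f (ω e) := by
    intro ω; simp
  simp_rw [h2] at this
  rw [this, Finset.prod_eq_single e]
  · simp
  · intro b _ hb; simp [hb]
  · simp

/-- The relative entropy of product Bernoulli laws is the sum of the relative entropies of the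
marginals; coordinates where `q` is degenerate are covered by `0 * log 0 = 0`. -/
lemma sum_bw_log (q p : ι → ℝ) (hp : ∀ e, p e ∈ Ioo (0:ℝ) 1) :
    ∑ ω, bw q ω * Real.log (bw q ω / bw p ω) = ∑ e, relEnt (q e) (p e) := by
  have h1 : ∀ ω : ι → Bool, bw q ω * Real.log (bw q ω / bw p ω)
      = ∑ e, bw q ω * Real.log ((if ω e then q e else 1 - q e) / (if ω e then p e else 1 - p e)) := by
    intro ω
    by_cases h0 : bw q ω = 0
    · simp [h0]
    · rw [← Finset.mul_sum, bw, bw, ← Finset.prod_div_distrib, Real.log_prod]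
      intro e _
      refine div_ne_zero (Finset.prod_ne_zero_iff.1 h0 e (Finset.mem_univ _)) ?_
      have := hp e
      split_ifs
      · exact this.1.ne'
      · linarith [this.2]
  simp_rw [h1]
  rw [Finset.sum_comm]
  refine Finset.sum_congr rfl fun e _ => ?_
  have := sum_bw_marginal q e
    (fun b => Real.log ((if b then q e else 1 - q e) / (if b then p e else 1 - p e)))
  rw [this]
  simp [relEnt]

lemma mul_log_div_ge {a b : ℝ} (ha : 0 ≤ a) (hb : 0 < b) : a - b ≤ a * Real.log (a / b) := by
  rcases ha.eq_or_lt with rfl | ha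
  · simp [hb.le]
  · have h := Real.log_le_sub_one_of_pos (div_pos hb ha)
    have h2 : Real.log (a / b) = - Real.log (b / a) := by rw [← Real.log_inv, inv_div]
    have h3 : a * (b / a) = b := by field_simp
    rw [h2]
    nlinarith

/-- Change of measure: the log-sum inequality on the event `E`, the complement of `E`
contributing at least `-1` to the relative entropy. -/
lemma change_of_measure (q p : ι → ℝ) (hq : ∀ e, q e ∈ Icc (0:ℝ) 1)
    (hp : ∀ e, p e ∈ Ioo (0:ℝ) 1) (E : Finset (ι → Bool)) (hE : 0 < ∑ ω ∈ E, bw q ω) :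
    Real.log (∑ ω ∈ E, bw q ω) - (∑ e, relEnt (q e) (p e) + 1) / (∑ ω ∈ E, bw q ω)
      ≤ Real.log (∑ ω ∈ E, bw p ω) := by
  set Q := ∑ ω ∈ E, bw q ω with hQ
  set P := ∑ ω ∈ E, bw p ω with hP
  have hPpos : 0 < P := by
    refine Finset.sum_pos (fun ω _ => bw_pos hp ω) ?_
    by_contra hne
    rw [Finset.not_nonempty_iff_eq_empty] at hne
    simp [hQ, hne] at hE
  set H := ∑ e, relEnt (q e) (p e) with hH
  have hHsum : ∑ ω ∈ E, bw q ω * Real.log (bw q ω / bw p ω)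
      + ∑ ω ∈ Eᶜ, bw q ω * Real.log (bw q ω / bw p ω) = H := by
    rw [Finset.sum_add_sum_compl, sum_bw_log q p hp]
  have hc : -1 ≤ ∑ ω ∈ Eᶜ, bw q ω * Real.log (bw q ω / bw p ω) := by
    have h1 : ∑ ω ∈ Eᶜ, (bw q ω - bw p ω) ≤ ∑ ω ∈ Eᶜ, bw q ω * Real.log (bw q ω / bw p ω) :=
      Finset.sum_le_sum fun ω _ => mul_log_div_ge (bw_nonneg hq ω) (bw_pos hp ω)
    have h2 : ∑ ω ∈ Eᶜ, bw p ω ≤ 1 := by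
      rw [← sum_bw p]
      exact Finset.sum_le_sum_of_subset_of_nonneg (Finset.subset_univ _)
        fun ω _ _ => (bw_pos hp ω).le
    have h3 : 0 ≤ ∑ ω ∈ Eᶜ, bw q ω := Finset.sum_nonneg fun ω _ => bw_nonneg hq ω
    rw [Finset.sum_sub_distrib] at h1
    linarith
  have hE2 : Q * Real.log (Q / P) ≤ ∑ ω ∈ E, bw q ω * Real.log (bw q ω / bw p ω) := by
    -- comparison of `q` with `(Q / P) • p`, which has the same mass on `E`
    have h1 : ∀ ω, bw q ω - Q / P * bw p ω + bw q ω * Real.log (Q / P)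
        ≤ bw q ω * Real.log (bw q ω / bw p ω) := by
      intro ω
      have hc : 0 < Q / P := div_pos hE hPpos
      have h := mul_log_div_ge (bw_nonneg hq ω) (mul_pos hc (bw_pos hp ω))
      rcases (bw_nonneg hq ω).eq_or_lt with h0 | h0
      · rw [← h0] at h ⊢; simpa using h
      · rw [mul_comm (Q / P) (bw p ω), ← div_div, Real.log_div (div_pos h0 (bw_pos hp ω)).ne' hc.ne']
          at h
        nlinarith
    have h2 := Finset.sum_le_sum fun ω (_ : ω ∈ E) => h1 ω
    rw [Finset.sum_add_distrib, Finset.sum_sub_distrib, ← Finset.mul_sum, ← Finset.sum_mul,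
      ← hQ, ← hP, div_mul_cancel₀ _ hPpos.ne'] at h2
    linarith
  rw [Real.log_div hE.ne' hPpos.ne'] at hE2
  have h4 : Real.log Q - Real.log P ≤ (H + 1) / Q := by
    rw [le_div_iff₀ hE]; nlinarith
  linarith

/-- A centred Bernoulli variable has moment generating function at most `exp (t ^ 2)` for
`|t| ≤ 1`. -/
lemma mgf_bound {q t : ℝ} (hq : q ∈ Icc (0:ℝ) 1) (ht : |t| ≤ 1) :
    q * Real.exp (t * (1 - q)) + (1 - q) * Real.exp (t * (0 - q)) ≤ Real.exp (t ^ 2) := by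
  obtain ⟨h0, h1⟩ := hq
  have key : ∀ s : ℝ, |s| ≤ 1 → Real.exp (t * s) ≤ 1 + t * s + t ^ 2 * s ^ 2 := by
    intro s hs
    have h := Real.abs_exp_sub_one_sub_id_le (x := t * s)
      (by rw [abs_mul]; exact mul_le_one₀ ht (abs_nonneg _) hs)
    have := (abs_le.1 h).2
    nlinarith
  have k1 := key (1 - q) (by rw [abs_le]; constructor <;> linarith)
  have k2 := key (0 - q) (by rw [abs_le]; constructor <;> linarith)
  have h3 := Real.add_one_le_exp (t ^ 2)
  have h5 : q * (1 - q) ≤ 1 := by nlinarith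
  have h6 : t ^ 2 * (q * (1 - q)) ≤ t ^ 2 * 1 := mul_le_mul_of_nonneg_left h5 (sq_nonneg t)
  nlinarith [mul_le_mul_of_nonneg_left k1 h0, mul_le_mul_of_nonneg_left k2 (sub_nonneg.2 h1)]

/-- The numerical value of an edge indicator. -/
def ind (b : Bool) : ℝ := if b then 1 else 0

lemma mgf_sum_bound {q c : ι → ℝ} {t : ℝ} (hq : ∀ e, q e ∈ Icc (0:ℝ) 1) (ht : |t| ≤ 1)
    (hc : ∀ e, c e = 0 ∨ c e = 1) :
    ∑ ω, bw q ω * Real.exp (t * ∑ e, c e * (ind (ω e) - q e)) ≤ Real.exp (t ^ 2 * ∑ e, c e) := by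
  simp_rw [Finset.mul_sum, Real.exp_sum]
  rw [sum_bw_prod q (fun e b => Real.exp (t * (c e * (ind b - q e))))]
  refine Finset.prod_le_prod (fun e _ => ?_) fun e _ => ?_
  · have := hq e
    have h1 : 0 ≤ 1 - q e := by linarith [this.2]
    have h0 := this.1
    positivity
  · rcases hc e with h | h
    · simp [h]
    · simpa [h, ind] using mgf_bound (hq e) ht

/-- Flipping one coordinate changes the sign of the weight times the centred coordinate. -/
lemma bw_flip (q : ι → ℝ) (e : ι) (ω : ι → Bool) :
    bw q (Function.update ω e (!ω e)) * (ind (!ω e) - q e) = -(bw q ω * (ind (ω e) - q e)) := by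
  rw [bw, bw, ← Finset.mul_prod_erase _ _ (Finset.mem_univ e),
    ← Finset.mul_prod_erase (a := e) _ (fun e => if ω e then q e else 1 - q e) (Finset.mem_univ e)]
  have : ∏ x ∈ Finset.univ.erase e, (if Function.update ω e (!ω e) x then q x else 1 - q x)
      = ∏ x ∈ Finset.univ.erase e, (if ω x then q x else 1 - q x) := by
    refine Finset.prod_congr rfl fun x hx => ?_
    rw [Function.update_of_ne (Finset.ne_of_mem_erase hx)]
  rw [this, Function.update_self]
  cases ω e <;> simp [ind] <;> ring

/-- A centred coordinate is uncorrelated with every function of the other coordinates. -/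
lemma sum_bw_centred_mul (q : ι → ℝ) (e : ι) (F : (ι → Bool) → ℝ)
    (hF : ∀ ω b, F (Function.update ω e b) = F ω) :
    ∑ ω, bw q ω * ((ind (ω e) - q e) * F ω) = 0 := by
  let φ : (ι → Bool) → (ι → Bool) := fun ω => Function.update ω e (!ω e)
  have hinv : Function.Involutive φ := by
    intro ω
    simp [φ]
  have h := Function.Bijective.sum_comp hinv.bijective
    (fun ω => bw q ω * ((ind (ω e) - q e) * F ω))
  have h2 : ∀ ω, bw q (φ ω) * ((ind (φ ω e) - q e) * F (φ ω))
      = -(bw q ω * ((ind (ω e) - q e) * F ω)) := by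
    intro ω
    simp only [φ]
    rw [hF, Function.update_self, ← mul_assoc, bw_flip]
    ring
  simp_rw [h2, Finset.sum_neg_distrib] at h
  linarith

end Bernoulli

/-! ### Random graphs as configurations of edges -/

/-- The potential edges of a graph on `N` vertices: ordered pairs `(i, j)` with `i < j`. -/
abbrev Edge (N : ℕ) := {e : Fin N × Fin N // e.1 < e.2}

/-- The edge indicator of the pair `{i, j}` in a configuration of edges. -/
def edgeVal {N : ℕ} (ω : Edge N → Bool) (i j : Fin N) : Bool :=
  if hij : i < j then ω ⟨(i, j), hij⟩ else if hji : j < i then ω ⟨(j, i), hji⟩ else false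

section Graph

variable {N : ℕ}

lemma edgeVal_symm (ω : Edge N → Bool) (i j : Fin N) : edgeVal ω i j = edgeVal ω j i := by
  rcases lt_trichotomy i j with h | h | h
  · simp [edgeVal, h, h.not_gt]
  · simp [h]
  · simp [edgeVal, h, h.not_gt]

lemma edgeVal_self (ω : Edge N → Bool) (i : Fin N) : edgeVal ω i i = false := by
  simp [edgeVal]

lemma edgeVal_edge (ω : Edge N → Bool) (e : Edge N) : edgeVal ω e.1.1 e.1.2 = ω e := by
  simp [edgeVal, e.2]

/-- Configurations of edges correspond to adjacency matrices. -/
def adjEquiv (N : ℕ) : (Edge N → Bool) ≃ AdjMat N where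
  toFun ω := ⟨edgeVal ω, edgeVal_symm ω, edgeVal_self ω⟩
  invFun A e := A.1 e.1.1 e.1.2
  left_inv ω := by
    funext e
    exact edgeVal_edge ω e
  right_inv A := by
    ext i j
    rcases lt_trichotomy i j with h | h | h
    · simp [edgeVal, h]
    · subst h; simp [edgeVal, A.2.2]
    · simp [edgeVal, h, h.not_gt, A.2.1 i j]

lemma sum_edge (F : Fin N → Fin N → ℝ) :
    ∑ e : Edge N, F e.1.1 e.1.2 = ∑ i, ∑ j, if i < j then F i j else 0 := by
  rw [← Fintype.sum_prod_type' (f := fun i j => if i < j then F i j else 0), ← Finset.sum_filter]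
  exact (Finset.sum_subtype (Finset.univ.filter fun e : Fin N × Fin N => e.1 < e.2)
    (by simp) (fun e => F e.1 e.2)).symm

lemma prod_edge (F : Fin N → Fin N → ℝ) :
    ∏ e : Edge N, F e.1.1 e.1.2 = ∏ i, ∏ j, if i < j then F i j else 1 := by
  rw [← Fintype.prod_prod_type' (f := fun i j => if i < j then F i j else 1), ← Finset.prod_filter]
  exact (Finset.prod_subtype (Finset.univ.filter fun e : Fin N × Fin N => e.1 < e.2)
    (by simp) (fun e => F e.1 e.2)).symm

lemma errgWeight_eq (p : Fin N → Fin N → ℝ) (ω : Edge N → Bool) :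
    errgWeight N p (adjEquiv N ω) = bw (fun e : Edge N => p e.1.1 e.1.2) ω := by
  rw [errgWeight, bw, ← prod_edge]
  refine Finset.prod_congr rfl fun e _ => ?_
  simp [adjEquiv, edgeVal_edge]

open Classical in
lemma errgProb_eq (p : Fin N → Fin N → ℝ) (E : Set (AdjMat N)) :
    errgProb N p E = ∑ ω ∈ Finset.univ.filter (fun ω : Edge N → Bool => adjEquiv N ω ∈ E),
      bw (fun e : Edge N => p e.1.1 e.1.2) ω := by
  rw [errgProb, Finset.sum_filter, ← Equiv.sum_comp (adjEquiv N)]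
  simp_rw [errgWeight_eq]

/-- Twice the sum over edges of a symmetric function is the sum over off-diagonal entries. -/
lemma two_mul_sum_edge (F : Fin N → Fin N → ℝ) (hF : ∀ i j, F i j = F j i) :
    2 * ∑ e : Edge N, F e.1.1 e.1.2 = ∑ i, ∑ j, if i = j then 0 else F i j := by
  have h1 : ∑ i, ∑ j, (if i < j then F i j else 0) = ∑ i, ∑ j, if j < i then F i j else 0 := by
    rw [Finset.sum_comm]
    simp_rw [fun i j => hF j i]
  rw [two_mul, sum_edge]
  nth_rw 2 [h1]
  simp_rw [← Finset.sum_add_distrib]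
  refine Finset.sum_congr rfl fun i _ => Finset.sum_congr rfl fun j _ => ?_
  rcases lt_trichotomy i j with h | h | h
  · simp [h, h.not_gt, h.ne]
  · simp [h]
  · simp [h, h.not_gt, h.ne']

/-- A row sum written as a sum over the edges at the vertex `i`. -/
lemma sum_edge_row (F : Fin N → Fin N → ℝ) (hF : ∀ i j, F i j = F j i) (hF0 : ∀ i, F i i = 0)
    (i : Fin N) :
    ∑ e : Edge N, ((if e.1.1 = i then 1 else 0) + (if e.1.2 = i then 1 else 0)) * F e.1.1 e.1.2
      = ∑ j, F i j := by
  rw [sum_edge (fun a b => ((if a = i then 1 else 0) + (if b = i then 1 else 0)) * F a b)]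
  have h1 : ∀ a b : Fin N,
      (if a < b then ((if a = i then 1 else 0) + (if b = i then 1 else 0)) * F a b else 0)
      = (if a = i then (if i < b then F i b else 0) else 0)
        + (if b = i then (if a < i then F i a else 0) else 0) := by
    intro a b
    by_cases ha : a = i
    · subst ha
      by_cases hb : b = a
      · subst hb; simp
      · simp [hb]
    · by_cases hb : b = i
      · subst hb; simp [ha, hF a b]
      · simp [ha, hb]
  simp_rw [h1, Finset.sum_add_distrib]
  rw [Finset.sum_comm]
  simp only [Finset.sum_ite_eq', Finset.mem_univ, if_true]
  rw [← Finset.sum_add_distrib]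
  refine Finset.sum_congr rfl fun j _ => ?_
  rcases lt_trichotomy i j with h | h | h
  · simp [h, h.not_gt]
  · subst h; simp [hF0]
  · simp [h, h.not_gt]

/-- The centred adjacency matrix. -/
def cen (q : Fin N → Fin N → ℝ) (ω : Edge N → Bool) (i j : Fin N) : ℝ :=
  ind (edgeVal ω i j) - q i j

/-- A matrix of edge probabilities: symmetric, with zero diagonal and entries in `[0,1]`. The zero
diagonal makes the centred adjacency matrix vanish there, graphs having no loops. -/
structure IsProbMat (q : Fin N → Fin N → ℝ) : Prop where
  symm : ∀ i j, q i j = q j i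
  diag : ∀ i, q i i = 0
  mem : ∀ i j, q i j ∈ Icc (0:ℝ) 1

variable {q : Fin N → Fin N → ℝ}

lemma cen_symm (hq : IsProbMat q) (ω : Edge N → Bool) (i j : Fin N) :
    cen q ω i j = cen q ω j i := by
  rw [cen, cen, edgeVal_symm, hq.symm]

lemma cen_self (hq : IsProbMat q) (ω : Edge N → Bool) (i : Fin N) : cen q ω i i = 0 := by
  simp [cen, edgeVal_self, hq.diag, ind]

lemma abs_cen_le (hq : IsProbMat q) (ω : Edge N → Bool) (i j : Fin N) : |cen q ω i j| ≤ 1 := by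
  have := hq.mem i j
  rw [cen, ind, abs_le]
  split_ifs <;> constructor <;> linarith [this.1, this.2]

/-- The law of the edges of the random graph with edge probabilities `q`, as a weight on
configurations. -/
def ew (q : Fin N → Fin N → ℝ) : (Edge N → Bool) → ℝ := bw (fun e : Edge N => q e.1.1 e.1.2)

lemma ew_nonneg (hq : IsProbMat q) (ω : Edge N → Bool) : 0 ≤ ew q ω :=
  bw_nonneg (fun _ => hq.mem _ _) ω

lemma sum_ew (q : Fin N → Fin N → ℝ) : ∑ ω, ew q ω = 1 := sum_bw _

lemma cen_update (ω : Edge N → Bool) (e : Edge N) (b : Bool) {i j : Fin N}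
    (h1 : (i, j) ≠ e.1) (h2 : (j, i) ≠ e.1) :
    cen q (Function.update ω e b) i j = cen q ω i j := by
  have : edgeVal (Function.update ω e b) i j = edgeVal ω i j := by
    unfold edgeVal
    split_ifs with h h'
    · rw [Function.update_of_ne]
      intro he; exact h1 (congrArg Subtype.val he)
    · rw [Function.update_of_ne]
      intro he; exact h2 (congrArg Subtype.val he)
    · rfl
  rw [cen, cen, this]

/-- A centred edge variable is uncorrelated with any function of the other edges. -/
lemma sum_ew_cen_mul (hq : IsProbMat q) {i k : Fin N} (hik : i ≠ k) (F : (Edge N → Bool) → ℝ)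
    (hF : ∀ (e : Edge N), (e.1 = (i, k) ∨ e.1 = (k, i)) → ∀ ω b, F (Function.update ω e b) = F ω) :
    ∑ ω, ew q ω * (cen q ω i k * F ω) = 0 := by
  wlog h : i < k generalizing i k
  · have := this hik.symm (fun e he => hF e he.symm) (lt_of_le_of_ne (not_lt.1 h) hik.symm)
    simp_rw [cen_symm hq _ i k]
    exact this
  have := sum_bw_centred_mul (fun e : Edge N => q e.1.1 e.1.2) ⟨(i, k), h⟩ F
    (hF ⟨(i, k), h⟩ (Or.inl rfl))
  rw [← this]
  refine Finset.sum_congr rfl fun ω _ => ?_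
  simp [ew, cen, edgeVal, h]

/-- Distinct paths of length two between distinct vertices are uncorrelated. -/
lemma sum_ew_path (hq : IsProbMat q) {i j k l : Fin N} (hij : i ≠ j) (hkl : k ≠ l) :
    ∑ ω, ew q ω * ((cen q ω i k * cen q ω k j) * (cen q ω i l * cen q ω l j)) = 0 := by
  by_cases hik : i = k
  · subst hik; simp [cen_self hq]
  by_cases hkj : k = j
  · subst hkj; simp [cen_self hq]
  have := sum_ew_cen_mul hq hik (fun ω => cen q ω k j * (cen q ω i l * cen q ω l j)) (by
    intro e he ω b
    have h1 : ∀ a c : Fin N, (a, c) ≠ (i, k) → (a, c) ≠ (k, i) →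
        cen q (Function.update ω e b) a c = cen q ω a c := by
      intro a c hac hca
      refine cen_update ω e b ?_ ?_
      · rcases he with he | he <;> rw [he] <;> assumption
      · rcases he with he | he <;> rw [he] <;>
          simp only [ne_eq, Prod.mk.injEq] at hac hca ⊢ <;> tauto
    rw [h1 k j, h1 i l, h1 l j] <;> simp only [ne_eq, Prod.mk.injEq] <;> grind)
  rw [← this]
  refine Finset.sum_congr rfl fun ω _ => by ring

/-- The squared Hilbert–Schmidt norm of the square of the centred adjacency matrix. -/
def hs (q : Fin N → Fin N → ℝ) (ω : Edge N → Bool) : ℝ :=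
  ∑ i, ∑ j, (∑ k, cen q ω i k * cen q ω k j) ^ 2

lemma abs_path_le (hq : IsProbMat q) (ω : Edge N → Bool) (i j k l : Fin N) :
    cen q ω i k * cen q ω k j * (cen q ω i l * cen q ω l j) ≤ 1 := by
  refine (le_abs_self _).trans ?_
  simp_rw [abs_mul]
  have h := abs_cen_le hq ω
  exact mul_le_one₀ (mul_le_one₀ (h _ _) (abs_nonneg _) (h _ _))
    (mul_nonneg (abs_nonneg _) (abs_nonneg _)) (mul_le_one₀ (h _ _) (abs_nonneg _) (h _ _))

/-- Expanding the square gives a sum over indices `i, j, k, l` of at most `N ^ 4` terms, of which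
only those with `i = j` or `k = l` have nonzero expectation. -/
lemma sum_ew_hs (hq : IsProbMat q) : ∑ ω, ew q ω * hs q ω ≤ 2 * (N:ℝ) ^ 3 := by
  have h1 : ∑ ω, ew q ω * hs q ω = ∑ i, ∑ j, ∑ k, ∑ l, ∑ ω, ew q ω *
      ((cen q ω i k * cen q ω k j) * (cen q ω i l * cen q ω l j)) := by
    simp_rw [hs, sq, Finset.sum_mul_sum, Finset.mul_sum]
    rw [Finset.sum_comm]; refine Finset.sum_congr rfl fun i _ => ?_
    rw [Finset.sum_comm]; refine Finset.sum_congr rfl fun j _ => ?_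
    rw [Finset.sum_comm]; refine Finset.sum_congr rfl fun k _ => ?_
    rw [Finset.sum_comm]
  have h2 : ∀ i j k l, ∑ ω, ew q ω *
      ((cen q ω i k * cen q ω k j) * (cen q ω i l * cen q ω l j))
      ≤ (if i = j then 1 else 0) + (if k = l then 1 else 0) := by
    intro i j k l
    have hle : ∑ ω, ew q ω * ((cen q ω i k * cen q ω k j) * (cen q ω i l * cen q ω l j)) ≤ 1 := by
      rw [← sum_ew q]
      refine Finset.sum_le_sum fun ω _ => ?_
      have := abs_path_le hq ω i j k l
      nlinarith [ew_nonneg hq ω]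
    by_cases hij : i = j
    · rw [if_pos hij]
      split_ifs <;> linarith
    · by_cases hkl : k = l
      · rw [if_pos hkl, if_neg hij]; linarith
      · rw [sum_ew_path hq hij hkl, if_neg hij, if_neg hkl]; norm_num
  rw [h1]
  calc _ ≤ ∑ i : Fin N, ∑ j : Fin N, ∑ k : Fin N, ∑ l : Fin N,
        (((if i = j then 1 else 0) + (if k = l then 1 else 0) : ℝ)) :=
        Finset.sum_le_sum fun i _ => Finset.sum_le_sum fun j _ => Finset.sum_le_sum fun k _ =>
          Finset.sum_le_sum fun l _ => h2 i j k l
    _ = 2 * (N:ℝ) ^ 3 := by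
        simp [Finset.sum_add_distrib]
        ring

/-- Moment generating function of the deviation of the degree of the vertex `i`: the edges at `i`
are independent and there are at most `N` of them. -/
lemma sum_ew_exp (hq : IsProbMat q) {t : ℝ} (ht : |t| ≤ 1) (i : Fin N) :
    ∑ ω, ew q ω * Real.exp (t * ∑ j, cen q ω i j) ≤ Real.exp (t ^ 2 * N) := by
  let c : Edge N → ℝ := fun e => (if e.1.1 = i then 1 else 0) + (if e.1.2 = i then 1 else 0)
  have h1 : ∀ ω, ∑ j, cen q ω i j = ∑ e : Edge N, c e * (ind (ω e) - q e.1.1 e.1.2) := by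
    intro ω
    rw [← sum_edge_row (cen q ω) (cen_symm hq ω) (cen_self hq ω)]
    refine Finset.sum_congr rfl fun e _ => ?_
    rw [cen, edgeVal_edge]
  have hc : ∀ e, c e = 0 ∨ c e = 1 := by
    intro e
    have := e.2.ne
    simp only [c]
    by_cases ha : e.1.1 = i
    · rw [if_pos ha, if_neg (fun hb => this (ha.trans hb.symm))]; simp
    · rw [if_neg ha]; split_ifs <;> simp
  have hcs : ∑ e, c e ≤ N := by
    have h2 := sum_edge_row (fun a b : Fin N => if a = b then (0:ℝ) else 1)
      (by intro a b; simp [eq_comm]) (by simp) i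
    have h3 : ∑ e, c e = ∑ j, if i = j then (0:ℝ) else 1 := by
      rw [← h2]
      refine Finset.sum_congr rfl fun e _ => ?_
      simp [c, e.2.ne]
    rw [h3]
    calc _ ≤ ∑ j : Fin N, (1:ℝ) := Finset.sum_le_sum fun j _ => by split_ifs <;> norm_num
      _ = N := by simp
  simp_rw [h1]
  refine (mgf_sum_bound (fun e => hq.mem _ _) ht hc).trans ?_
  gcongr

/-- The centred adjacency matrix is small: its row sums are at most `ε N` and its operator norm,
controlled through the Hilbert–Schmidt norm of its square, is at most `ε N`. -/
def Good (q : Fin N → Fin N → ℝ) (ε : ℝ) (ω : Edge N → Bool) : Prop :=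
  (∀ i, ∑ j, cen q ω i j ≤ ε * N) ∧ hs q ω ≤ (ε * N) ^ 4

open Classical in
/-- Concentration of the random graph: Markov's inequality in exponential form with a union bound
over the vertices for the degrees, and Markov's inequality for `hs`. -/
lemma prob_good (hN : 0 < N) (hq : IsProbMat q) {ε : ℝ} (h0 : 0 < ε) (h1 : ε ≤ 1) :
    1 - (N * Real.exp (-(ε ^ 2 / 4 * N)) + 2 / ε ^ 4 / N)
      ≤ ∑ ω ∈ Finset.univ.filter (fun ω => Good q ε ω), ew q ω := by
  have hN' : (0:ℝ) < N := Nat.cast_pos.2 hN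
  have hs0 : ∀ ω, 0 ≤ hs q ω := fun ω =>
    Finset.sum_nonneg fun i _ => Finset.sum_nonneg fun j _ => sq_nonneg _
  -- pointwise Markov bound for the complement, with exponential parameter `ε / 2`
  have key : ∀ ω, 1 ≤ (if Good q ε ω then (1:ℝ) else 0)
      + ((∑ i, Real.exp (ε / 2 * ∑ j, cen q ω i j) * Real.exp (-(ε / 2 * (ε * N))))
        + hs q ω / (ε * N) ^ 4) := by
    intro ω
    have hp1 : 0 ≤ hs q ω / (ε * N) ^ 4 := div_nonneg (hs0 ω) (by positivity)
    have hp2 : 0 ≤ ∑ i, Real.exp (ε / 2 * ∑ j, cen q ω i j) * Real.exp (-(ε / 2 * (ε * N))) :=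
      Finset.sum_nonneg fun i _ => by positivity
    by_cases hg : Good q ε ω
    · rw [if_pos hg]; linarith
    rw [if_neg hg]
    rw [Good, not_and_or] at hg
    rcases hg with hg | hg
    · push Not at hg
      obtain ⟨i, hi⟩ := hg
      have h2 : 1 ≤ Real.exp (ε / 2 * ∑ j, cen q ω i j) * Real.exp (-(ε / 2 * (ε * N))) := by
        rw [← Real.exp_add]
        apply Real.one_le_exp
        nlinarith
      have h3 := Finset.single_le_sum (f := fun i => Real.exp (ε / 2 * ∑ j, cen q ω i j)
        * Real.exp (-(ε / 2 * (ε * N)))) (fun i _ => by positivity) (Finset.mem_univ i)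
      linarith
    · have h2 : 1 ≤ hs q ω / (ε * N) ^ 4 := by
        rw [one_le_div (by positivity)]; exact (not_le.1 hg).le
      linarith
  have hsum : ∑ ω, ew q ω * 1 ≤ ∑ ω, ew q ω * ((if Good q ε ω then (1:ℝ) else 0)
      + ((∑ i, Real.exp (ε / 2 * ∑ j, cen q ω i j) * Real.exp (-(ε / 2 * (ε * N))))
        + hs q ω / (ε * N) ^ 4)) :=
    Finset.sum_le_sum fun ω _ => mul_le_mul_of_nonneg_left (key ω) (ew_nonneg hq ω)
  simp_rw [mul_one, mul_add, Finset.sum_add_distrib, mul_ite, mul_one, mul_zero,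
    ← Finset.sum_filter] at hsum
  rw [sum_ew] at hsum
  have hb1 : ∑ ω, ew q ω * ∑ i, Real.exp (ε / 2 * ∑ j, cen q ω i j)
      * Real.exp (-(ε / 2 * (ε * N))) ≤ N * Real.exp (-(ε ^ 2 / 4 * N)) := by
    have h3 : Real.exp ((ε / 2) ^ 2 * N) * Real.exp (-(ε / 2 * (ε * N)))
        = Real.exp (-(ε ^ 2 / 4 * N)) := by
      rw [← Real.exp_add]; congr 1; ring
    have hK := (Real.exp_pos (-(ε / 2 * (ε * N)))).le
    generalize Real.exp (-(ε / 2 * (ε * N))) = K at h3 hK ⊢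
    have h4 : ∑ ω, ew q ω * ∑ i, Real.exp (ε / 2 * ∑ j, cen q ω i j) * K
        = ∑ i, (∑ ω, ew q ω * Real.exp (ε / 2 * ∑ j, cen q ω i j)) * K := by
      simp_rw [Finset.mul_sum, Finset.sum_mul]
      rw [Finset.sum_comm]
      simp_rw [mul_assoc]
    have h2 := sum_ew_exp hq (t := ε / 2) (by rw [abs_of_pos (by linarith)]; linarith)
    rw [h4, ← h3]
    refine (Finset.sum_le_sum fun i _ => mul_le_mul_of_nonneg_right (h2 i) hK).trans (le_of_eq ?_)
    rw [Finset.sum_const, Finset.card_univ, Fintype.card_fin, nsmul_eq_mul]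
  have hb2 : ∑ ω, ew q ω * (hs q ω / (ε * N) ^ 4) ≤ 2 / ε ^ 4 / N := by
    simp_rw [← mul_div_assoc]
    rw [← Finset.sum_div, div_le_iff₀ (by positivity)]
    refine (sum_ew_hs hq).trans (le_of_eq ?_)
    field_simp
  linarith

end Graph

/-! ### Dirichlet forms and Laplacian matrices -/

section Matrix

variable {N : ℕ}

/-- The quadratic form of a symmetric matrix is bounded through the Hilbert–Schmidt norm of its
square, since `‖m‖ ^ 4 = ‖m ^ 2‖ ^ 2`. -/
lemma quad_form_bound (m : Fin N → Fin N → ℝ) (hm : ∀ i j, m i j = m j i) {δ : ℝ} (hδ : 0 ≤ δ)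
    (hhs : ∑ i, ∑ j, (∑ k, m i k * m k j) ^ 2 ≤ δ ^ 4) (v : Fin N → ℝ) :
    |∑ i, ∑ j, m i j * (v i * v j)| ≤ δ * ∑ i, v i ^ 2 := by
  set S := ∑ i, v i ^ 2 with hS
  have hS0 : 0 ≤ S := Finset.sum_nonneg fun i _ => sq_nonneg _
  set T := ∑ i, (∑ j, m i j * v j) ^ 2 with hT
  have hT1 : T = ∑ k, ∑ l, (v k * v l) * ∑ i, m k i * m i l := by
    simp_rw [hT, sq, Finset.sum_mul_sum, Finset.mul_sum]
    rw [Finset.sum_comm]; refine Finset.sum_congr rfl fun k _ => ?_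
    rw [Finset.sum_comm]; refine Finset.sum_congr rfl fun l _ => ?_
    refine Finset.sum_congr rfl fun i _ => ?_
    rw [hm k i]; ring
  have hT2 : T ^ 2 ≤ S ^ 2 * δ ^ 4 := by
    have h := Finset.sum_mul_sq_le_sq_mul_sq (Finset.univ : Finset (Fin N × Fin N))
      (fun p => v p.1 * v p.2) (fun p => ∑ i, m p.1 i * m i p.2)
    rw [Fintype.sum_prod_type, Fintype.sum_prod_type, Fintype.sum_prod_type] at h
    simp only at h
    rw [← hT1] at h
    have h2 : ∑ k, ∑ l, (v k * v l) ^ 2 = S ^ 2 := by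
      simp_rw [mul_pow]
      rw [sq S, hS, Finset.sum_mul_sum]
    rw [h2] at h
    exact h.trans (mul_le_mul_of_nonneg_left hhs (sq_nonneg _))
  have hT3 : T ≤ S * δ ^ 2 := by
    refine le_of_sq_le_sq ?_ (by positivity)
    calc T ^ 2 ≤ S ^ 2 * δ ^ 4 := hT2
      _ = (S * δ ^ 2) ^ 2 := by ring
  have hX : (∑ i, ∑ j, m i j * (v i * v j)) = ∑ i, v i * ∑ j, m i j * v j := by
    simp_rw [Finset.mul_sum]
    refine Finset.sum_congr rfl fun i _ => Finset.sum_congr rfl fun j _ => by ring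
  rw [hX]
  refine abs_le_of_sq_le_sq ?_ (by positivity)
  have h := Finset.sum_mul_sq_le_sq_mul_sq (Finset.univ : Finset (Fin N)) v
    (fun i => ∑ j, m i j * v j)
  calc _ ≤ S * T := h
    _ ≤ S * (S * δ ^ 2) := mul_le_mul_of_nonneg_left hT3 hS0
    _ = _ := by ring

lemma sum_symm_sq (m : Fin N → Fin N → ℝ) (hm : ∀ i j, m i j = m j i) (v : Fin N → ℝ) :
    ∑ i, ∑ j, m i j * (v i - v j) ^ 2
      = 2 * ∑ i, (∑ j, m i j) * v i ^ 2 - 2 * ∑ i, ∑ j, m i j * (v i * v j) := by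
  have h1 : ∑ i, ∑ j, m i j * v j ^ 2 = ∑ i, ∑ j, m i j * v i ^ 2 := by
    rw [Finset.sum_comm]
    simp_rw [fun i j => hm j i]
  have h2 : ∀ i j, m i j * (v i - v j) ^ 2
      = m i j * v i ^ 2 + m i j * v j ^ 2 - 2 * (m i j * (v i * v j)) := by
    intro i j; ring
  simp_rw [h2, Finset.sum_sub_distrib, Finset.sum_add_distrib, h1, Finset.sum_mul, Finset.mul_sum]
  rw [← two_mul]
  simp_rw [Finset.mul_sum]

/-- Passage from a Dirichlet form bound for `q` to one for `a`, when `a - q` has small row sums and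
small operator norm. -/
lemma dirichlet_perturb (a q : Fin N → Fin N → ℝ) (hm : ∀ i j, a i j - q i j = a j i - q j i)
    {Λ δ K : ℝ} (hδ : 0 ≤ δ)
    (hq : ∀ v : Fin N → ℝ, ∑ i, ∑ j, q i j * (v i - v j) ^ 2 ≤ 2 * Λ * ∑ i, v i ^ 2)
    (hrow : ∀ i, ∑ j, (a i j - q i j) ≤ δ)
    (hhs : ∑ i, ∑ j, (∑ k, (a i k - q i k) * (a k j - q k j)) ^ 2 ≤ δ ^ 4)
    (hK : Λ + 2 * δ ≤ K) (v : Fin N → ℝ) :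
    ∑ i, ∑ j, a i j * (v i - v j) ^ 2 ≤ 2 * K * ∑ i, v i ^ 2 := by
  have hS0 : 0 ≤ ∑ i, v i ^ 2 := Finset.sum_nonneg fun i _ => sq_nonneg _
  have h1 : ∑ i, ∑ j, a i j * (v i - v j) ^ 2 = ∑ i, ∑ j, q i j * (v i - v j) ^ 2
      + ∑ i, ∑ j, (a i j - q i j) * (v i - v j) ^ 2 := by
    simp_rw [← Finset.sum_add_distrib]
    refine Finset.sum_congr rfl fun i _ => Finset.sum_congr rfl fun j _ => by ring
  have h2 := sum_symm_sq (fun i j => a i j - q i j) hm v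
  have h3 := (abs_le.1 (quad_form_bound (fun i j => a i j - q i j) hm hδ hhs v)).1
  have h4 : ∑ i, (∑ j, (a i j - q i j)) * v i ^ 2 ≤ δ * ∑ i, v i ^ 2 := by
    rw [Finset.mul_sum]
    exact Finset.sum_le_sum fun i _ => mul_le_mul_of_nonneg_right (hrow i) (sq_nonneg _)
  have h5 := hq v
  nlinarith [mul_le_mul_of_nonneg_right hK hS0]

/-- Testing the Dirichlet form on a basis vector bounds the off-diagonal row sums. -/
lemma row_le_of_dirichlet (a : Fin N → Fin N → ℝ) (ha : ∀ i j, a i j = a j i)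
    (ha0 : ∀ i, a i i = 0) {K : ℝ}
    (hD : ∀ v : Fin N → ℝ, ∑ i, ∑ j, a i j * (v i - v j) ^ 2 ≤ 2 * K * ∑ i, v i ^ 2) (i : Fin N) :
    ∑ j, a i j ≤ K := by
  have h := hD (fun k => if k = i then 1 else 0)
  rw [sum_symm_sq a ha] at h
  simp [ha0] at h
  exact h

/-- For a nonnegative symmetric matrix a bound on the Dirichlet form bounds the operator norm of
the Laplacian matrix. -/
lemma laplacian_sq_le (a : Fin N → Fin N → ℝ) (ha : ∀ i j, a i j = a j i)
    (hpos : ∀ i j, 0 ≤ a i j) {K : ℝ} (hK : 0 < K)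
    (hD : ∀ v : Fin N → ℝ, ∑ i, ∑ j, a i j * (v i - v j) ^ 2 ≤ 2 * K * ∑ i, v i ^ 2)
    (v : Fin N → ℝ) :
    ∑ i, (∑ j, a i j * (v i - v j)) ^ 2 ≤ K ^ 2 * ∑ i, v i ^ 2 := by
  set w : Fin N → ℝ := fun i => ∑ j, a i j * (v i - v j) with hw
  have h1 : ∑ i, w i ^ 2 = ∑ i, ∑ j, a i j * ((v i - v j) * w i) := by
    refine Finset.sum_congr rfl fun i _ => ?_
    rw [sq]
    nth_rw 1 [hw]
    simp only
    rw [Finset.sum_mul]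
    refine Finset.sum_congr rfl fun j _ => by ring
  have h2 : ∑ i, w i ^ 2 = ∑ i, ∑ j, a i j * ((v j - v i) * w j) := by
    rw [h1, Finset.sum_comm]
    simp_rw [fun i j => ha j i]
  have h3 : 2 * ∑ i, w i ^ 2 = ∑ i, ∑ j, a i j * ((v i - v j) * (w i - w j)) := by
    rw [two_mul]
    nth_rw 1 [h1]
    rw [h2]
    simp_rw [← Finset.sum_add_distrib]
    refine Finset.sum_congr rfl fun i _ => Finset.sum_congr rfl fun j _ => by ring
  -- `2 x y ≤ K x ^ 2 + y ^ 2 / K`, applied to the increments of `v` and of `w = L v`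
  have h4 : K * (2 * ∑ i, w i ^ 2) ≤ (K ^ 2 / 2) * (∑ i, ∑ j, a i j * (v i - v j) ^ 2)
      + 1 / 2 * ∑ i, ∑ j, a i j * (w i - w j) ^ 2 := by
    rw [h3]
    simp_rw [Finset.mul_sum, ← Finset.sum_add_distrib]
    refine Finset.sum_le_sum fun i _ => Finset.sum_le_sum fun j _ => ?_
    nlinarith [mul_nonneg (hpos i j) (sq_nonneg (K * (v i - v j) - (w i - w j)))]
  have h5 := hD v
  have h6 := hD w
  have h7 : K * (2 * ∑ i, w i ^ 2) ≤ K * (K ^ 2 * ∑ i, v i ^ 2 + ∑ i, w i ^ 2) := by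
    nlinarith [mul_le_mul_of_nonneg_left h5 (sq_nonneg K)]
  have h8 := le_of_mul_le_mul_left h7 hK
  linarith

end Matrix

/-! ### Blocks of the unit interval and the Laplacian operator -/

section Blocks

variable {N : ℕ}

lemma measurableSet_blk (i : Fin N) : MeasurableSet (blk N i) := measurableSet_Ico

lemma mem_blk_iff (hN : 0 < N) (i : Fin N) (x : ℝ) :
    x ∈ blk N i ↔ 0 ≤ x ∧ ⌊x * N⌋₊ = (i : ℕ) := by
  have hN' : (0:ℝ) < N := Nat.cast_pos.2 hN
  rw [blk, mem_Ico, div_le_iff₀ hN', lt_div_iff₀ hN']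
  constructor
  · rintro ⟨h1, h2⟩
    have h0 : 0 ≤ x * N := le_trans (by positivity) h1
    exact ⟨nonneg_of_mul_nonneg_left h0 hN', (Nat.floor_eq_iff h0).2 ⟨h1, h2⟩⟩
  · rintro ⟨h0, h1⟩
    exact (Nat.floor_eq_iff (mul_nonneg h0 hN'.le)).1 h1

lemma blk_unique {i j : Fin N} {x : ℝ} (hi : x ∈ blk N i) (hj : x ∈ blk N j) : i = j := by
  have hN : 0 < N := i.pos
  rw [mem_blk_iff hN] at hi hj
  exact Fin.ext (hi.2.symm.trans hj.2)

lemma blk_disjoint : Pairwise (Function.onFun Disjoint (blk N)) := by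
  intro i j hij
  exact Set.disjoint_left.2 fun x hi hj => hij (blk_unique hi hj)

lemma iUnion_blk (hN : 0 < N) : ⋃ i, blk N i = Ico (0:ℝ) 1 := by
  have hN' : (0:ℝ) < N := Nat.cast_pos.2 hN
  ext x
  simp only [mem_iUnion, mem_blk_iff hN, mem_Ico]
  constructor
  · rintro ⟨i, h0, hi⟩
    refine ⟨h0, ?_⟩
    have h1 : ⌊x * N⌋₊ < N := hi ▸ i.2
    rw [Nat.floor_lt (mul_nonneg h0 hN'.le)] at h1
    nlinarith
  · rintro ⟨h0, h1⟩
    refine ⟨⟨⌊x * N⌋₊, ?_⟩, h0, rfl⟩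
    rw [Nat.floor_lt (mul_nonneg h0 hN'.le)]
    nlinarith

lemma blk_subset_UI (i : Fin N) : blk N i ⊆ UI := by
  have : blk N i ⊆ Ico (0:ℝ) 1 := iUnion_blk i.pos ▸ subset_iUnion (blk N) i
  exact this.trans Ico_subset_Icc_self

lemma UI_ae (hN : 0 < N) : UI =ᵐ[volume] ⋃ i, blk N i := by
  rw [iUnion_blk hN]
  exact Ico_ae_eq_Icc.symm

lemma measurableSet_UI : MeasurableSet UI := measurableSet_Icc

instance : IsProbabilityMeasure (volume.restrict UI) :=
  ⟨by simp [UI]⟩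

instance : IsProbabilityMeasure ((volume : Measure (ℝ × ℝ)).restrict (UI ×ˢ UI)) := by
  rw [Measure.volume_eq_prod, ← Measure.prod_restrict]
  infer_instance

instance (i : Fin N) : IsFiniteMeasure (volume.restrict (blk N i)) :=
  ⟨by simp [blk]⟩

instance (i j : Fin N) :
    IsFiniteMeasure ((volume : Measure (ℝ × ℝ)).restrict (blk N i ×ˢ blk N j)) := by
  rw [Measure.volume_eq_prod, ← Measure.prod_restrict]
  infer_instance

lemma volume_real_blk (i : Fin N) : volume.real (blk N i) = 1 / N := by
  have h : ((i:ℝ) + 1) / N - (i:ℝ) / N = 1 / N := by ring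
  rw [blk, Real.volume_real_Ico, h, max_eq_left (by positivity)]

lemma volume_real_blk_prod (i j : Fin N) :
    (volume : Measure (ℝ × ℝ)).real (blk N i ×ˢ blk N j) = 1 / (N:ℝ) ^ 2 := by
  rw [Measure.volume_eq_prod, measureReal_prod_prod, volume_real_blk, volume_real_blk]
  ring

lemma integrableOn_UI (hN : 0 < N) {F : ℝ → ℝ} :
    IntegrableOn F UI ↔ ∀ i : Fin N, IntegrableOn F (blk N i) := by
  rw [integrableOn_congr_set_ae (UI_ae hN), integrableOn_finite_iUnion]

lemma integral_UI (hN : 0 < N) {F : ℝ → ℝ} (hF : ∀ i : Fin N, IntegrableOn F (blk N i)) :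
    ∫ x in UI, F x = ∑ i : Fin N, ∫ x in blk N i, F x := by
  rw [setIntegral_congr_set (UI_ae hN), integral_iUnion_fintype measurableSet_blk blk_disjoint hF]

lemma UI_prod_ae (hN : 0 < N) :
    (UI ×ˢ UI : Set (ℝ × ℝ)) =ᵐ[volume] ⋃ p : Fin N × Fin N, blk N p.1 ×ˢ blk N p.2 := by
  have h : ⋃ p : Fin N × Fin N, blk N p.1 ×ˢ blk N p.2 = (⋃ i, blk N i) ×ˢ (⋃ i, blk N i) := by
    ext x; simp only [mem_iUnion, mem_prod, Prod.exists]; tauto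
  rw [h, Measure.volume_eq_prod]
  exact Measure.set_prod_ae_eq (UI_ae hN) (UI_ae hN)

lemma integrableOn_UI_prod (hN : 0 < N) {F : ℝ × ℝ → ℝ} :
    IntegrableOn F (UI ×ˢ UI) ↔ ∀ i j : Fin N, IntegrableOn F (blk N i ×ˢ blk N j) := by
  rw [integrableOn_congr_set_ae (UI_prod_ae hN), integrableOn_finite_iUnion, Prod.forall]

lemma integral_UI_prod (hN : 0 < N) {F : ℝ × ℝ → ℝ}
    (hF : ∀ i j : Fin N, IntegrableOn F (blk N i ×ˢ blk N j)) :
    ∫ p in UI ×ˢ UI, F p = ∑ i : Fin N, ∑ j : Fin N, ∫ p in blk N i ×ˢ blk N j, F p := by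
  rw [setIntegral_congr_set (UI_prod_ae hN), integral_iUnion_fintype, Fintype.sum_prod_type]
  · exact fun p => (measurableSet_blk p.1).prod (measurableSet_blk p.2)
  · rintro ⟨i, j⟩ ⟨k, l⟩ h
    refine Set.disjoint_left.2 fun x hx hy => h ?_
    exact Prod.ext (blk_unique hx.1 hy.1) (blk_unique hx.2 hy.2)
  · exact fun p => hF p.1 p.2

end Blocks

section Operator

lemma l2_sq (F : ℝ → ℝ) : l2 F ^ 2 = ∫ x in UI, F x ^ 2 := by
  have h : 0 ≤ ∫ x in UI, F x ^ 2 := integral_nonneg fun x => sq_nonneg _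
  rw [l2, ← Real.sqrt_eq_rpow, Real.sq_sqrt h]

lemma l2_nonneg (F : ℝ → ℝ) : 0 ≤ l2 F :=
  Real.rpow_nonneg (integral_nonneg fun _ => sq_nonneg _) _

lemma l2_const_mul (c : ℝ) (F : ℝ → ℝ) : l2 (fun x => c * F x) = |c| * l2 F := by
  have h : ∀ G : ℝ → ℝ, l2 G = √(∫ x in UI, G x ^ 2) := fun G => by
    rw [l2, Real.sqrt_eq_rpow]
  simp_rw [h, mul_pow, integral_const_mul]
  rw [Real.sqrt_mul (sq_nonneg c), Real.sqrt_sq_eq_abs]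

lemma MemL2.integrableOn {u : ℝ → ℝ} (hu : MemL2 u) : IntegrableOn u UI := by
  refine Integrable.mono' (g := fun x => 1 + u x ^ 2) ((integrable_const 1).add hu.2)
    hu.1.aestronglyMeasurable (ae_of_all _ fun x => ?_)
  rw [Real.norm_eq_abs, abs_le]
  constructor <;> nlinarith [sq_nonneg (u x - 1), sq_nonneg (u x + 1)]

lemma lapNorm_nonneg (f : ℝ → ℝ → ℝ) : 0 ≤ lapNorm f := by
  refine Real.sSup_nonneg ?_
  rintro c ⟨u, -, -, rfl⟩
  exact l2_nonneg _

lemma lapNorm_le {f : ℝ → ℝ → ℝ} {C : ℝ} (hC : 0 ≤ C)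
    (h : ∀ u, MemL2 u → ∫ x in UI, lapApply f u x ^ 2 ≤ C ^ 2 * ∫ x in UI, u x ^ 2) :
    lapNorm f ≤ C := by
  refine Real.sSup_le ?_ hC
  rintro c ⟨u, hu, h1, rfl⟩
  have := h u hu
  rw [← l2_sq, ← l2_sq, h1] at this
  exact le_of_sq_le_sq (by linarith) hC

lemma lapApply_sq_le {h : ℝ → ℝ → ℝ} (hh : IsGraphon h) {u : ℝ → ℝ} (hu : MemL2 u) :
    ∫ x in UI, lapApply h u x ^ 2 ≤ 4 * ∫ x in UI, u x ^ 2 := by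
  set U := ∫ x in UI, |u x| with hU
  have hui : Integrable (fun x => |u x|) (volume.restrict UI) := hu.integrableOn.abs
  have hU0 : 0 ≤ U := integral_nonneg fun _ => abs_nonneg _
  -- variance inequality `(∫ |u|) ^ 2 ≤ ∫ u ^ 2` on the probability space `[0, 1]`
  have hU2 : U ^ 2 ≤ ∫ x in UI, u x ^ 2 := by
    have h1 : 0 ≤ ∫ x in UI, (|u x| - U) ^ 2 := integral_nonneg fun _ => sq_nonneg _
    have h2 : ∀ x, (|u x| - U) ^ 2 = u x ^ 2 - 2 * U * |u x| + U ^ 2 := by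
      intro x; rw [← sq_abs (u x)]; ring
    simp_rw [h2] at h1
    have h3 : Integrable (fun x => u x ^ 2 - 2 * U * |u x|) (volume.restrict UI) :=
      hu.2.sub (hui.const_mul _)
    rw [integral_add h3 (integrable_const _),
      integral_sub hu.2 (hui.const_mul _), integral_const_mul] at h1
    simp only [integral_const, probReal_univ, smul_eq_mul] at h1
    nlinarith
  have hpt : ∀ x, |lapApply h u x| ≤ |u x| + U := by
    intro x
    have h1 : ∀ y, ‖h x y * (u x - u y)‖ ≤ |u x| + |u y| := by
      intro y
      have h2 := hh.2.2 x y
      rw [norm_mul, Real.norm_eq_abs, Real.norm_eq_abs, abs_of_nonneg h2.1]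
      calc _ ≤ 1 * |u x - u y| := mul_le_mul_of_nonneg_right h2.2 (abs_nonneg _)
        _ ≤ _ := by rw [one_mul]; exact abs_sub _ _
    have h3 := norm_integral_le_of_norm_le (μ := volume.restrict UI)
      (((integrable_const |u x|).add hui)) (ae_of_all _ h1)
    have h4 : ∫ y in UI, (|u x| + |u y|) = |u x| + U := by
      rw [integral_add (integrable_const _) hui]
      simp [hU]
    simp only [Pi.add_apply] at h3
    rw [h4] at h3
    exact h3
  calc _ ≤ ∫ x in UI, (2 * u x ^ 2 + 2 * U ^ 2) := by
        refine integral_mono_of_nonneg (ae_of_all _ fun _ => sq_nonneg _)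
          ((hu.2.const_mul 2).add (integrable_const _)) (ae_of_all _ fun x => ?_)
        have h1 := sq_le_sq' (by linarith [abs_nonneg (lapApply h u x), abs_nonneg (u x)]) (hpt x)
        rw [sq_abs] at h1
        have h2 := sq_abs (u x)
        simp only
        nlinarith [sq_nonneg (|u x| - U)]
    _ = 2 * (∫ x in UI, u x ^ 2) + 2 * U ^ 2 := by
        rw [integral_add (hu.2.const_mul 2) (integrable_const _), integral_const_mul]
        simp
    _ ≤ _ := by linarith

/-- The set of norms in the definition of `lapNorm` is bounded, so that its `sSup` is a genuine
supremum. -/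
lemma bddAbove_lap {h : ℝ → ℝ → ℝ} (hh : IsGraphon h) :
    BddAbove {c | ∃ u : ℝ → ℝ, MemL2 u ∧ l2 u = 1 ∧ c = l2 (lapApply h u)} := by
  refine ⟨2, ?_⟩
  rintro c ⟨u, hu, h1, rfl⟩
  have := lapApply_sq_le hh hu
  rw [← l2_sq, ← l2_sq, h1] at this
  exact le_of_sq_le_sq (by linarith) (by norm_num)

/-- The defining property of the operator norm, for functions of arbitrary norm. -/
lemma l2_lapApply_le {h : ℝ → ℝ → ℝ} (hh : IsGraphon h) {u : ℝ → ℝ} (hu : MemL2 u) :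
    ∫ x in UI, lapApply h u x ^ 2 ≤ lapNorm h ^ 2 * ∫ x in UI, u x ^ 2 := by
  rw [← l2_sq, ← l2_sq]
  rcases (l2_nonneg u).eq_or_lt with h0 | h0
  · have := lapApply_sq_le hh hu
    rw [← l2_sq, ← l2_sq] at this
    rw [← h0] at this ⊢
    linarith
  · have hv : MemL2 (fun x => (l2 u)⁻¹ * u x) :=
      ⟨hu.1.const_mul _, by simp_rw [mul_pow]; exact hu.2.const_mul _⟩
    have h1 : l2 (fun x => (l2 u)⁻¹ * u x) = 1 := by
      rw [l2_const_mul, abs_of_pos (inv_pos.2 h0), inv_mul_cancel₀ h0.ne']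
    have h2 : lapApply h (fun x => (l2 u)⁻¹ * u x) = fun x => (l2 u)⁻¹ * lapApply h u x := by
      funext x
      rw [lapApply, lapApply, ← integral_const_mul]
      congr 1; funext y; ring
    have h3 := le_csSup (bddAbove_lap hh) ⟨_, hv, h1, rfl⟩
    rw [h2, l2_const_mul, abs_of_pos (inv_pos.2 h0), inv_mul_le_iff₀ h0] at h3
    have h4 := pow_le_pow_left₀ (l2_nonneg _) h3 2
    rw [mul_comm, mul_pow] at h4
    exact h4

end Operator

/-! ### Discretisation of graphons -/

section Discretisation

variable {N : ℕ}

/-- The block averages of a kernel. -/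
def blkAvg (N : ℕ) (h : ℝ → ℝ → ℝ) (i j : Fin N) : ℝ :=
  (N:ℝ) ^ 2 * ∫ p in blk N i ×ˢ blk N j, h p.1 p.2

/-- The edge probabilities of the tilted measure: block averages, without loops. -/
def qMat (N : ℕ) (h : ℝ → ℝ → ℝ) (i j : Fin N) : ℝ := if i = j then 0 else blkAvg N h i j

/-- The step function with value `v i` on the `i`-th block. -/
def stepFun (v : Fin N → ℝ) (x : ℝ) : ℝ := ∑ i, (blk N i).indicator (fun _ => v i) x

lemma stepFun_of_mem (v : Fin N → ℝ) {i : Fin N} {x : ℝ} (hx : x ∈ blk N i) :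
    stepFun v x = v i := by
  rw [stepFun, Finset.sum_eq_single i]
  · simp [hx]
  · intro j _ hj
    rw [indicator_of_notMem]
    exact fun hxj => hj (blk_unique hxj hx)
  · simp

lemma measurable_stepFun (v : Fin N → ℝ) : Measurable (stepFun v) :=
  Finset.measurable_sum _ fun i _ => measurable_const.indicator (measurableSet_blk i)

lemma integrableOn_stepFun_sq (v : Fin N → ℝ) (i : Fin N) :
    IntegrableOn (fun x => stepFun v x ^ 2) (blk N i) :=
  (integrableOn_congr_fun (fun x hx => by rw [stepFun_of_mem v hx]) (measurableSet_blk i)).2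
    (integrable_const (v i ^ 2))

lemma memL2_stepFun (hN : 0 < N) (v : Fin N → ℝ) : MemL2 (stepFun v) :=
  ⟨measurable_stepFun v, (integrableOn_UI hN).2 (integrableOn_stepFun_sq v)⟩

lemma integral_stepFun_sq (hN : 0 < N) (v : Fin N → ℝ) :
    ∫ x in UI, stepFun v x ^ 2 = (∑ i, v i ^ 2) / N := by
  rw [integral_UI hN (integrableOn_stepFun_sq v), Finset.sum_div]
  refine Finset.sum_congr rfl fun i _ => ?_
  rw [setIntegral_congr_fun (g := fun _ => v i ^ 2) (measurableSet_blk i)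
    (fun x hx => by simp only [stepFun_of_mem v hx]), setIntegral_const, volume_real_blk]
  simp [div_eq_inv_mul]

variable {h : ℝ → ℝ → ℝ}

lemma IsGraphon.norm_le (hh : IsGraphon h) (x y : ℝ) : ‖h x y‖ ≤ 1 := by
  have := hh.2.2 x y
  rw [Real.norm_eq_abs, abs_of_nonneg this.1]
  exact this.2

lemma IsGraphon.measurable_right (hh : IsGraphon h) (x : ℝ) : Measurable (h x) :=
  hh.2.1.comp measurable_prodMk_left

lemma IsGraphon.measurable_prod (hh : IsGraphon h) : Measurable fun p : ℝ × ℝ => h p.1 p.2 :=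
  hh.2.1

lemma IsGraphon.integrableOn_blk (hh : IsGraphon h) (x : ℝ) (j : Fin N) :
    IntegrableOn (h x) (blk N j) :=
  Integrable.mono' (integrable_const 1) (hh.measurable_right x).aestronglyMeasurable
    (ae_of_all _ fun y => hh.norm_le x y)

lemma IsGraphon.integrable_prod (hh : IsGraphon h) (μ : Measure (ℝ × ℝ)) [IsFiniteMeasure μ] :
    Integrable (fun p : ℝ × ℝ => h p.1 p.2) μ :=
  Integrable.mono' (integrable_const 1) hh.measurable_prod.aestronglyMeasurable
    (ae_of_all _ fun p => hh.norm_le p.1 p.2)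

/-- The contribution of one block to the degree function. -/
def degBlk (N : ℕ) (h : ℝ → ℝ → ℝ) (j : Fin N) (x : ℝ) : ℝ := ∫ y in blk N j, h x y

lemma IsGraphon.measurable_degBlk (hh : IsGraphon h) (j : Fin N) : Measurable (degBlk N h j) :=
  (StronglyMeasurable.integral_prod_right (ν := volume.restrict (blk N j))
    hh.2.1.stronglyMeasurable).measurable

lemma IsGraphon.norm_degBlk_le (hh : IsGraphon h) (j : Fin N) (x : ℝ) :
    ‖degBlk N h j x‖ ≤ 1 / N := by
  rw [← volume_real_blk j, ← one_mul (volume.real _)]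
  exact norm_setIntegral_le_of_norm_le_const (by simp [blk]) fun y _ => hh.norm_le x y

lemma IsGraphon.integral_degBlk (hh : IsGraphon h) (hN : 0 < N) (i j : Fin N) :
    ∫ x in blk N i, degBlk N h j x = blkAvg N h i j / (N:ℝ) ^ 2 := by
  have hN' : (N:ℝ) ^ 2 ≠ 0 := by positivity
  rw [blkAvg, mul_div_cancel_left₀ _ hN', Measure.volume_eq_prod, setIntegral_prod]
  · rfl
  · rw [IntegrableOn, ← Measure.volume_eq_prod]
    exact hh.integrable_prod _

lemma blkAvg_symm (hh : IsGraphon h) (i j : Fin N) : blkAvg N h i j = blkAvg N h j i := by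
  have := setIntegral_prod_swap (μ := (volume : Measure ℝ)) (ν := (volume : Measure ℝ))
    (blk N i) (blk N j) (fun p => h p.1 p.2)
  rw [blkAvg, blkAvg, Measure.volume_eq_prod, ← this]
  simp_rw [Prod.fst_swap, Prod.snd_swap, fun x y => hh.1 x y]

lemma blkAvg_mem (hh : IsGraphon h) (hN : 0 < N) (i j : Fin N) :
    blkAvg N h i j ∈ Icc (0:ℝ) 1 := by
  have hN' : (0:ℝ) < (N:ℝ) ^ 2 := by positivity
  constructor
  · exact mul_nonneg hN'.le (integral_nonneg fun p => (hh.2.2 p.1 p.2).1)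
  · have h1 : ∫ p in blk N i ×ˢ blk N j, h p.1 p.2 ≤ ∫ p in blk N i ×ˢ blk N j, (1:ℝ) :=
      integral_mono (hh.integrable_prod _) (integrable_const 1) fun p => (hh.2.2 p.1 p.2).2
    rw [setIntegral_const, volume_real_blk_prod, smul_eq_mul, mul_one] at h1
    calc _ ≤ (N:ℝ) ^ 2 * (1 / (N:ℝ) ^ 2) := mul_le_mul_of_nonneg_left h1 hN'.le
      _ = 1 := by field_simp

lemma isProbMat_qMat (hh : IsGraphon h) (hN : 0 < N) : IsProbMat (qMat N h) where
  symm i j := by simp only [qMat, eq_comm (a := i), blkAvg_symm hh i j]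
  diag i := by simp [qMat]
  mem i j := by
    rw [qMat]
    split_ifs
    · simp
    · exact blkAvg_mem hh hN i j

lemma IsGraphon.lapApply_stepFun (hh : IsGraphon h) (hN : 0 < N) (v : Fin N → ℝ) {i : Fin N} {x : ℝ}
    (hx : x ∈ blk N i) :
    lapApply h (stepFun v) x = ∑ j, (v i - v j) * degBlk N h j x := by
  have h1 : ∀ j : Fin N, EqOn (fun y => h x y * (stepFun v x - stepFun v y))
      (fun y => (v i - v j) * h x y) (blk N j) := by
    intro j y hy
    simp only [stepFun_of_mem v hx, stepFun_of_mem v hy]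
    ring
  rw [lapApply, integral_UI hN]
  · refine Finset.sum_congr rfl fun j _ => ?_
    rw [setIntegral_congr_fun (measurableSet_blk j) (h1 j), integral_const_mul, degBlk]
  · intro j
    exact (integrableOn_congr_fun (h1 j) (measurableSet_blk j)).2
      ((hh.integrableOn_blk x j).const_mul _)

/-- The Dirichlet form of the block averages is bounded by the norm of the Laplacian operator:
on step functions the Dirichlet forms of a graphon and of its block averages coincide. -/
lemma dirichlet_blkAvg (hh : IsGraphon h) (hN : 0 < N) {C : ℝ} (hC : 0 < C) (hC' : lapNorm h ≤ C)
    (v : Fin N → ℝ) :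
    ∑ i, ∑ j, qMat N h i j * (v i - v j) ^ 2 ≤ 2 * (C * N) * ∑ i, v i ^ 2 := by
  have hN' : (0:ℝ) < N := Nat.cast_pos.2 hN
  set S := ∑ i, v i ^ 2 with hS
  have hS0 : 0 ≤ S := Finset.sum_nonneg fun i _ => sq_nonneg _
  set G : Fin N → ℝ → ℝ := fun i x => ∑ j, (v i - v j) * degBlk N h j x with hG
  have hGm : ∀ i, Measurable (G i) := fun i =>
    Finset.measurable_sum _ fun j _ => (hh.measurable_degBlk j).const_mul _
  have hGb : ∀ i x, ‖G i x‖ ≤ ∑ j, |v i - v j| * (1 / N) := fun i x => by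
    refine norm_sum_le_of_le _ fun j _ => ?_
    rw [norm_mul, Real.norm_eq_abs]
    exact mul_le_mul_of_nonneg_left (hh.norm_degBlk_le j x) (abs_nonneg _)
  have hdi : ∀ i j : Fin N, IntegrableOn (degBlk N h j) (blk N i) := fun i j =>
    Integrable.mono' (integrable_const (1 / (N:ℝ))) (hh.measurable_degBlk j).aestronglyMeasurable
      (ae_of_all _ fun x => hh.norm_degBlk_le j x)
  have hGi : ∀ i, IntegrableOn (G i) (blk N i) := fun i =>
    integrable_finsetSum _ fun j _ => (hdi i j).const_mul _
  have hG2i : ∀ i, IntegrableOn (fun x => G i x ^ 2) (blk N i) := fun i =>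
    Integrable.mono' (integrable_const ((∑ j, |v i - v j| * (1 / N)) ^ 2))
      ((hGm i).pow_const 2).aestronglyMeasurable (ae_of_all _ fun x => by
        rw [norm_pow]; exact pow_le_pow_left₀ (norm_nonneg _) (hGb i x) 2)
  have hL : ∑ i, ∫ x in blk N i, G i x ^ 2 ≤ C ^ 2 * (S / N) := by
    have h1 := l2_lapApply_le hh (memL2_stepFun hN v)
    have he : ∀ i : Fin N, EqOn (fun x => lapApply h (stepFun v) x ^ 2) (fun x => G i x ^ 2)
        (blk N i) := fun i x hx => by simp only [hh.lapApply_stepFun hN v hx, hG]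
    rw [integral_stepFun_sq hN, integral_UI hN fun i =>
      (integrableOn_congr_fun (he i) (measurableSet_blk i)).2 (hG2i i)] at h1
    calc _ = _ := Finset.sum_congr rfl fun i _ =>
          (setIntegral_congr_fun (measurableSet_blk i) (he i)).symm
      _ ≤ _ := h1
      _ ≤ _ := mul_le_mul_of_nonneg_right (pow_le_pow_left₀ (lapNorm_nonneg h) hC' 2)
          (by positivity)
  have hGint : ∀ i, ∫ x in blk N i, G i x = ∑ j, (v i - v j) * (blkAvg N h i j / (N:ℝ) ^ 2) := by
    intro i
    rw [integral_finsetSum _ fun j _ => (hdi i j).const_mul _]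
    refine Finset.sum_congr rfl fun j _ => ?_
    rw [integral_const_mul, hh.integral_degBlk hN]
  -- expansion of `0 ≤ ‖L u - C u‖²`, block by block
  have hexp : ∀ i, 0 ≤ (∫ x in blk N i, G i x ^ 2)
      - 2 * C * (v i * ∑ j, (v i - v j) * (blkAvg N h i j / (N:ℝ) ^ 2)) + C ^ 2 * (v i ^ 2 / N) := by
    intro i
    have h1 : 0 ≤ ∫ x in blk N i, (G i x - C * v i) ^ 2 := integral_nonneg fun _ => sq_nonneg _
    have h2 : ∀ x, (G i x - C * v i) ^ 2 = G i x ^ 2 - 2 * C * v i * G i x + C ^ 2 * v i ^ 2 := by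
      intro x; ring
    have h3 : Integrable (fun x => G i x ^ 2 - 2 * C * v i * G i x) (volume.restrict (blk N i)) :=
      (hG2i i).sub ((hGi i).const_mul _)
    simp_rw [h2] at h1
    rw [integral_add h3 (integrable_const _), integral_sub (hG2i i) ((hGi i).const_mul _),
      integral_const_mul, hGint, setIntegral_const, volume_real_blk, smul_eq_mul] at h1
    calc _ ≤ _ := h1
      _ = _ := by ring
  have hsum := Finset.sum_nonneg fun i (_ : i ∈ Finset.univ) => hexp i
  rw [Finset.sum_add_distrib, Finset.sum_sub_distrib, ← Finset.mul_sum, ← Finset.mul_sum,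
    ← Finset.sum_div, ← hS] at hsum
  have hq : ∀ i j, qMat N h i j * (v i - v j) ^ 2 = blkAvg N h i j * (v i - v j) ^ 2 := by
    intro i j
    by_cases hij : i = j
    · simp [hij]
    · simp [qMat, hij]
  have hD : ∑ i, ∑ j, qMat N h i j * (v i - v j) ^ 2
      = 2 * (N:ℝ) ^ 2 * ∑ i, v i * ∑ j, (v i - v j) * (blkAvg N h i j / (N:ℝ) ^ 2) := by
    have h1 : ∑ i, v i * ∑ j, (v i - v j) * (blkAvg N h i j / (N:ℝ) ^ 2)
        = ∑ i, ∑ j, v i * ((v i - v j) * (blkAvg N h i j / (N:ℝ) ^ 2)) := by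
      simp_rw [Finset.mul_sum]
    have h2 : ∑ i, ∑ j, v i * ((v i - v j) * (blkAvg N h i j / (N:ℝ) ^ 2))
        = ∑ i, ∑ j, v j * ((v j - v i) * (blkAvg N h i j / (N:ℝ) ^ 2)) := by
      rw [Finset.sum_comm]
      simp_rw [fun i j => blkAvg_symm hh j i]
    rw [h1, mul_comm 2, mul_assoc, two_mul]
    nth_rw 1 [h2]
    simp_rw [hq, ← Finset.sum_add_distrib, Finset.mul_sum]
    refine Finset.sum_congr rfl fun i _ => Finset.sum_congr rfl fun j _ => ?_
    field_simp
    ring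
  rw [hD]
  set X := ∑ i, v i * ∑ j, (v i - v j) * (blkAvg N h i j / (N:ℝ) ^ 2)
  have h5 : 2 * C * X ≤ 2 * C * (C * (S / N)) := by nlinarith
  have h6 := le_of_mul_le_mul_left h5 (by positivity)
  calc 2 * (N:ℝ) ^ 2 * X ≤ 2 * (N:ℝ) ^ 2 * (C * (S / N)) := by gcongr
    _ = _ := by field_simp

/-- The Laplacian operator of an empirical graphon is controlled by the Laplacian matrix. A
function splits into its block means, on which the operator acts as the Laplacian matrix, and a
part with vanishing block means, on which it multiplies by the degrees. -/
lemma lapNorm_empGraphon_le (hN : 0 < N) (A : AdjMat N) {C : ℝ} (hC : 0 ≤ C)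
    (hrow : ∀ i, ∑ j, ind (A.1 i j) ≤ C * N)
    (hlap : ∀ v : Fin N → ℝ, ∑ i, (∑ j, ind (A.1 i j) * (v i - v j)) ^ 2
      ≤ (C * N) ^ 2 * ∑ i, v i ^ 2) :
    lapNorm (empGraphon N A) ≤ C := by
  have hN' : (0:ℝ) < N := Nat.cast_pos.2 hN
  refine lapNorm_le hC fun u hu => ?_
  have hui : ∀ i : Fin N, IntegrableOn u (blk N i) := fun i =>
    hu.integrableOn.mono_set (blk_subset_UI i)
  have hu2i : ∀ i : Fin N, IntegrableOn (fun x => u x ^ 2) (blk N i) := fun i =>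
    hu.2.mono_set (blk_subset_UI i)
  have hemp : ∀ i j x y, x ∈ blk N i → y ∈ blk N j → empGraphon N A x y = ind (A.1 i j) := by
    intro i j x y hx hy
    have : (∃ i j : Fin N, A.1 i j = true ∧ x ∈ blk N i ∧ y ∈ blk N j) ↔ A.1 i j = true := by
      constructor
      · rintro ⟨i', j', h1, h2, h3⟩
        rwa [blk_unique hx h2, blk_unique hy h3]
      · exact fun h1 => ⟨i, j, h1, hx, hy⟩
    simp only [empGraphon, this, ind]
  let v : Fin N → ℝ := fun i => N * ∫ x in blk N i, u x
  let d : Fin N → ℝ := fun i => (∑ j, ind (A.1 i j)) / N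
  let b : Fin N → ℝ := fun i => (∑ j, ind (A.1 i j) * v j) / N
  have hv : ∀ i, ∫ x in blk N i, u x = v i / N := fun i => by
    simp only [v]; field_simp
  have hL : ∀ i : Fin N, ∀ x ∈ blk N i, lapApply (empGraphon N A) u x = d i * u x - b i := by
    intro i x hx
    have h1 : ∀ j : Fin N, EqOn (fun y => empGraphon N A x y * (u x - u y))
        (fun y => ind (A.1 i j) * (u x - u y)) (blk N j) := fun j y hy => by
      simp only [hemp i j x y hx hy]
    have h2 : ∀ j : Fin N, IntegrableOn (fun y => u x - u y) (blk N j) := fun j =>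
      (integrable_const _).sub (hui j)
    rw [lapApply, integral_UI hN fun j =>
      (integrableOn_congr_fun (h1 j) (measurableSet_blk j)).2 ((h2 j).const_mul _)]
    simp only [d, b, Finset.sum_div, Finset.sum_mul]
    rw [← Finset.sum_sub_distrib]
    refine Finset.sum_congr rfl fun j _ => ?_
    rw [setIntegral_congr_fun (measurableSet_blk j) (h1 j), integral_const_mul,
      integral_sub (integrable_const _) (hui j), setIntegral_const, volume_real_blk, hv, smul_eq_mul]
    ring
  have hexp : ∀ i (c e : ℝ), IntegrableOn (fun x => (c * u x - e) ^ 2) (blk N i) ∧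
      ∫ x in blk N i, (c * u x - e) ^ 2
        = c ^ 2 * (∫ x in blk N i, u x ^ 2) - 2 * c * e * (v i / N) + e ^ 2 / N := by
    intro i c e
    have h2 : ∀ x, (c * u x - e) ^ 2 = c ^ 2 * u x ^ 2 - 2 * c * e * u x + e ^ 2 := by
      intro x; ring
    have h3 : Integrable (fun x => c ^ 2 * u x ^ 2 - 2 * c * e * u x) (volume.restrict (blk N i)) :=
      ((hu2i i).const_mul _).sub ((hui i).const_mul _)
    simp_rw [h2]
    refine ⟨h3.add (integrable_const _), ?_⟩
    rw [integral_add h3 (integrable_const _),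
      integral_sub ((hu2i i).const_mul _) ((hui i).const_mul _), integral_const_mul,
      integral_const_mul, hv, setIntegral_const, volume_real_blk, smul_eq_mul]
    ring
  have he : ∀ i : Fin N, EqOn (fun x => lapApply (empGraphon N A) u x ^ 2)
      (fun x => (d i * u x - b i) ^ 2) (blk N i) := fun i x hx => by simp only [hL i x hx]
  rw [integral_UI hN fun i =>
      (integrableOn_congr_fun (he i) (measurableSet_blk i)).2 (hexp i _ _).1, integral_UI hN hu2i]
  have hlap' := hlap v
  have hdv : ∀ i, ∑ j, ind (A.1 i j) * (v i - v j) = N * (d i * v i - b i) := by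
    intro i
    simp only [d, b, mul_sub, Finset.sum_sub_distrib, ← Finset.sum_mul]
    field_simp
  simp_rw [hdv] at hlap'
  simp_rw [mul_pow, ← Finset.mul_sum] at hlap'
  have hlap2 : ∑ i, (d i * v i - b i) ^ 2 ≤ C ^ 2 * ∑ i, v i ^ 2 := by
    have h1 : (N:ℝ) ^ 2 * ∑ i, (d i * v i - b i) ^ 2 ≤ (N:ℝ) ^ 2 * (C ^ 2 * ∑ i, v i ^ 2) := by
      linarith
    exact le_of_mul_le_mul_left h1 (by positivity)
  have hd0 : ∀ i, 0 ≤ d i := fun i =>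
    div_nonneg (Finset.sum_nonneg fun j _ => by rw [ind]; split_ifs <;> norm_num) hN'.le
  have hd1 : ∀ i, d i ^ 2 ≤ C ^ 2 := fun i =>
    pow_le_pow_left₀ (hd0 i) ((div_le_iff₀ hN').2 (hrow i)) 2
  have hterm : ∀ i, ∫ x in blk N i, lapApply (empGraphon N A) u x ^ 2
      ≤ C ^ 2 * ((∫ x in blk N i, u x ^ 2) - v i ^ 2 / N) + (d i * v i - b i) ^ 2 / N := by
    intro i
    rw [setIntegral_congr_fun (measurableSet_blk i) (he i), (hexp i _ _).2]
    have h1 : 0 ≤ (∫ x in blk N i, u x ^ 2) - v i ^ 2 / N := by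
      have h2 : 0 ≤ ∫ x in blk N i, (1 * u x - v i) ^ 2 := integral_nonneg fun _ => sq_nonneg _
      rw [(hexp i _ _).2] at h2
      calc _ ≤ _ := h2
        _ = _ := by ring
    calc _ = d i ^ 2 * ((∫ x in blk N i, u x ^ 2) - v i ^ 2 / N) + (d i * v i - b i) ^ 2 / N := by
          ring
      _ ≤ _ := add_le_add (mul_le_mul_of_nonneg_right (hd1 i) h1) le_rfl
  refine (Finset.sum_le_sum fun i _ => hterm i).trans ?_
  rw [Finset.sum_add_distrib, ← Finset.mul_sum, Finset.sum_sub_distrib, ← Finset.sum_div,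
    ← Finset.sum_div]
  have h9 := div_le_div_of_nonneg_right hlap2 hN'.le
  rw [mul_div_assoc] at h9
  linarith

end Discretisation

/-! ### Relative entropy -/

section Entropy

/-- The expansion of the relative entropy holds for every `a`, also where `a` or `1 - a` vanishes,
because `x * log x = 0` at `x = 0`. -/
lemma relEnt_eq (a : ℝ) {b : ℝ} (hb : b ∈ Ioo (0:ℝ) 1) :
    relEnt a b = a * Real.log a + (1 - a) * Real.log (1 - a)
      - a * Real.log b - (1 - a) * Real.log (1 - b) := by
  have key : ∀ x y : ℝ, y ≠ 0 → x * Real.log (x / y) = x * Real.log x - x * Real.log y := by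
    intro x y hy
    by_cases hx : x = 0
    · simp [hx]
    · rw [Real.log_div hx hy]; ring
  rw [relEnt, key a b hb.1.ne', key (1 - a) (1 - b) (by linarith [hb.2])]
  ring

lemma relEnt_nonneg {a b : ℝ} (ha : a ∈ Icc (0:ℝ) 1) (hb : b ∈ Ioo (0:ℝ) 1) : 0 ≤ relEnt a b := by
  have h1 := mul_log_div_ge ha.1 hb.1
  have h2 := mul_log_div_ge (a := 1 - a) (b := 1 - b) (by linarith [ha.2]) (by linarith [hb.2])
  rw [relEnt]
  linarith

lemma norm_mul_log_le {a : ℝ} (ha : a ∈ Icc (0:ℝ) 1) : ‖a * Real.log a‖ ≤ 1 := by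
  rcases ha.1.eq_or_lt with h0 | h0
  · simp [← h0]
  · rw [mul_comm]; exact (Real.abs_log_mul_self_lt a h0 ha.2).le

lemma integrable_mul_log {μ : Measure (ℝ × ℝ)} [IsFiniteMeasure μ] {f : ℝ × ℝ → ℝ}
    (hf : Measurable f) (hf01 : ∀ p, f p ∈ Icc (0:ℝ) 1) :
    Integrable (fun p => f p * Real.log (f p)) μ :=
  Integrable.mono' (integrable_const 1)
    (hf.mul (Real.measurable_log.comp hf)).aestronglyMeasurable
    (ae_of_all _ fun p => norm_mul_log_le (hf01 p))

lemma IsGraphon.one_sub_mem {h : ℝ → ℝ → ℝ} (hh : IsGraphon h) (p : ℝ × ℝ) :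
    1 - h p.1 p.2 ∈ Icc (0:ℝ) 1 := by
  have := hh.2.2 p.1 p.2
  constructor <;> linarith [this.1, this.2]

lemma integrable_graphon_mul {h : ℝ × ℝ → ℝ} (hm : Measurable h) (h01 : ∀ p, h p ∈ Icc (0:ℝ) 1)
    {μ : Measure (ℝ × ℝ)} {s : ℝ × ℝ → ℝ} (hs : Integrable s μ) :
    Integrable (fun p => h p * s p) μ := by
  refine hs.mono (hm.aestronglyMeasurable.mul hs.1) (ae_of_all _ fun p => ?_)
  rw [norm_mul, Real.norm_eq_abs, abs_of_nonneg (h01 p).1]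
  exact mul_le_of_le_one_left (norm_nonneg _) (h01 p).2

variable {N : ℕ} {h : ℝ → ℝ → ℝ}

lemma integrableOn_relEnt (hh : IsGraphon h) {s : ℝ × ℝ → ℝ}
    {S : Set (ℝ × ℝ)} (hS : MeasurableSet S) [IsFiniteMeasure (volume.restrict S)]
    (hs : ∀ p ∈ S, s p ∈ Ioo (0:ℝ) 1)
    (h1 : IntegrableOn (fun p => Real.log (s p)) S)
    (h2 : IntegrableOn (fun p => Real.log (1 - s p)) S) :
    IntegrableOn (fun p => relEnt (h p.1 p.2) (s p)) S := by
  refine (integrableOn_congr_fun (fun p hp => relEnt_eq _ (hs p hp)) hS).2 ?_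
  exact (((integrable_mul_log hh.measurable_prod fun p => hh.2.2 p.1 p.2).add
    (integrable_mul_log (measurable_const.sub hh.measurable_prod) hh.one_sub_mem)).sub
    (integrable_graphon_mul hh.measurable_prod (fun p => hh.2.2 p.1 p.2) h1)).sub
    (integrable_graphon_mul (measurable_const.sub hh.measurable_prod) hh.one_sub_mem h2)

/-- Jensen's inequality for `x log x` on a block. -/
lemma jensen_blk (hN : 0 < N) (i j : Fin N) {f : ℝ × ℝ → ℝ}
    (hf : Measurable f) (hf01 : ∀ p, f p ∈ Icc (0:ℝ) 1) {a : ℝ}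
    (ha : a = (N:ℝ) ^ 2 * ∫ p in blk N i ×ˢ blk N j, f p) :
    a * Real.log a ≤ (N:ℝ) ^ 2 * ∫ p in blk N i ×ˢ blk N j, f p * Real.log (f p) := by
  have hN' : (N:ℝ) ≠ 0 := (Nat.cast_pos.2 hN).ne'
  have hr : (volume : Measure (ℝ × ℝ)).real (blk N i ×ˢ blk N j) ≠ 0 := by
    rw [volume_real_blk_prod]; positivity
  have hv : (volume : Measure (ℝ × ℝ)) (blk N i ×ˢ blk N j) ≠ 0 := fun h0 => hr (by
    rw [measureReal_def, h0]; rfl)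
  have hv2 : (volume : Measure (ℝ × ℝ)) (blk N i ×ˢ blk N j) ≠ ⊤ := fun h0 => hr (by
    rw [measureReal_def, h0]; rfl)
  have := Real.convexOn_mul_log.map_set_average_le Real.continuous_mul_log.continuousOn isClosed_Ici
    hv hv2 (f := f) (ae_of_all _ fun p => (hf01 p).1)
    (Integrable.mono' (integrable_const 1) hf.aestronglyMeasurable (ae_of_all _ fun p => by
      rw [Real.norm_eq_abs, abs_of_nonneg (hf01 p).1]; exact (hf01 p).2))
    (integrable_mul_log hf hf01)
  simp only [setAverage_eq, volume_real_blk_prod, one_div, inv_inv, smul_eq_mul] at this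
  rw [← ha] at this
  exact this

lemma relEnt_blkAvg_le (hh : IsGraphon h) (hN : 0 < N) (i j : Fin N) {c : ℝ}
    (hc : c ∈ Ioo (0:ℝ) 1) :
    relEnt (blkAvg N h i j) c
      ≤ (N:ℝ) ^ 2 * ∫ p in blk N i ×ˢ blk N j, relEnt (h p.1 p.2) c := by
  have hN' : (N:ℝ) ≠ 0 := (Nat.cast_pos.2 hN).ne'
  have hm1 := hh.measurable_prod
  have hm2 : Measurable fun p : ℝ × ℝ => 1 - h p.1 p.2 := measurable_const.sub hm1
  have h01 : ∀ p : ℝ × ℝ, h p.1 p.2 ∈ Icc (0:ℝ) 1 := fun p => hh.2.2 p.1 p.2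
  have hi : IntegrableOn (fun p : ℝ × ℝ => h p.1 p.2) (blk N i ×ˢ blk N j) := hh.integrable_prod _
  have hi2 : IntegrableOn (fun p : ℝ × ℝ => 1 - h p.1 p.2) (blk N i ×ˢ blk N j) :=
    (integrable_const 1).sub hi
  have hc1 : 1 - blkAvg N h i j = (N:ℝ) ^ 2 * ∫ p in blk N i ×ˢ blk N j, (1 - h p.1 p.2) := by
    rw [integral_sub (integrable_const 1) hi, setIntegral_const, volume_real_blk_prod, blkAvg,
      smul_eq_mul]
    field_simp
  have j1 := jensen_blk hN i j hm1 h01 (a := blkAvg N h i j) rfl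
  have j2 := jensen_blk hN i j hm2 hh.one_sub_mem hc1
  have l1 := integrable_mul_log (μ := volume.restrict (blk N i ×ˢ blk N j)) hm1 h01
  have l2_ := integrable_mul_log (μ := volume.restrict (blk N i ×ˢ blk N j)) hm2 hh.one_sub_mem
  have hint : ∫ p in blk N i ×ˢ blk N j, relEnt (h p.1 p.2) c
      = (∫ p in blk N i ×ˢ blk N j, h p.1 p.2 * Real.log (h p.1 p.2))
        + (∫ p in blk N i ×ˢ blk N j, (1 - h p.1 p.2) * Real.log (1 - h p.1 p.2))
        - (∫ p in blk N i ×ˢ blk N j, h p.1 p.2) * Real.log c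
        - (∫ p in blk N i ×ˢ blk N j, (1 - h p.1 p.2)) * Real.log (1 - c) := by
    simp_rw [relEnt_eq _ hc]
    rw [integral_sub, integral_sub, integral_add l1 l2_, integral_mul_const, integral_mul_const]
    · exact l1.add l2_
    · exact hi.mul_const _
    · exact (l1.add l2_).sub (hi.mul_const _)
    · exact hi2.mul_const _
  rw [hint, relEnt_eq _ hc, mul_sub, mul_sub, mul_add, ← mul_assoc ((N:ℝ) ^ 2),
    ← mul_assoc ((N:ℝ) ^ 2), ← hc1]
  have : (N:ℝ) ^ 2 * ∫ p in blk N i ×ˢ blk N j, h p.1 p.2 = blkAvg N h i j := rfl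
  rw [this]
  linarith

lemma left_mem_blk (hN : 0 < N) (i : Fin N) : ((i : ℕ) : ℝ) / N ∈ blk N i := by
  have hN' : (0:ℝ) < N := Nat.cast_pos.2 hN
  refine ⟨le_rfl, ?_⟩
  gcongr
  linarith

lemma blockGraphon_eq {s : ℝ → ℝ → ℝ} (hN : 0 < N) (hs : IsBlockGraphon N s) (i j : Fin N)
    {p : ℝ × ℝ} (hp : p ∈ blk N i ×ˢ blk N j) : s p.1 p.2 = pOf N s i j :=
  hs i j _ hp.1 _ (left_mem_blk hN i) _ hp.2 _ (left_mem_blk hN j)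

lemma pOf_mem {s : ℝ → ℝ → ℝ} (hN : 0 < N)
    (hs : ∀ x ∈ UI, ∀ y ∈ UI, s x y ∈ Ioo (0:ℝ) 1) (i j : Fin N) : pOf N s i j ∈ Ioo (0:ℝ) 1 :=
  hs _ (blk_subset_UI i (left_mem_blk hN i)) _ (blk_subset_UI j (left_mem_blk hN j))

lemma integrableOn_blockGraphon {s : ℝ → ℝ → ℝ} (hN : 0 < N) (hs : IsBlockGraphon N s) (φ : ℝ → ℝ) :
    IntegrableOn (fun p : ℝ × ℝ => φ (s p.1 p.2)) (UI ×ˢ UI) := by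
  refine (integrableOn_UI_prod hN).2 fun i j => ?_
  refine (integrableOn_congr_fun (fun p hp => ?_)
    ((measurableSet_blk i).prod (measurableSet_blk j))).2 (integrable_const (φ (pOf N s i j)))
  simp only [blockGraphon_eq hN hs i j hp]

/-- The normalised relative entropy of the tilted random graph is at most that of `h` with respect
to the block graphon. -/
lemma entropy_le {s : ℝ → ℝ → ℝ} (hh : IsGraphon h) (hN : 0 < N) (hsym : ∀ x y, s x y = s y x)
    (hs : IsBlockGraphon N s) (hs01 : ∀ x ∈ UI, ∀ y ∈ UI, s x y ∈ Ioo (0:ℝ) 1) :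
    2 * ∑ e : Edge N, relEnt (qMat N h e.1.1 e.1.2) (pOf N s e.1.1 e.1.2)
      ≤ (N:ℝ) ^ 2 * Ir s h := by
  have hI : IntegrableOn (fun p : ℝ × ℝ => relEnt (h p.1 p.2) (s p.1 p.2)) (UI ×ˢ UI) :=
    integrableOn_relEnt hh (measurableSet_UI.prod measurableSet_UI)
      (fun p hp => hs01 _ hp.1 _ hp.2) (integrableOn_blockGraphon hN hs _)
      (integrableOn_blockGraphon hN hs fun t => Real.log (1 - t))
  have hsymm : ∀ i j : Fin N, relEnt (qMat N h i j) (pOf N s i j)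
      = relEnt (qMat N h j i) (pOf N s j i) := by
    intro i j
    rw [(isProbMat_qMat hh hN).symm i j, pOf, pOf, hsym]
  rw [two_mul_sum_edge (fun i j => relEnt (qMat N h i j) (pOf N s i j)) hsymm, Ir,
    integral_UI_prod hN ((integrableOn_UI_prod hN).1 hI), Finset.mul_sum]
  refine Finset.sum_le_sum fun i _ => ?_
  rw [Finset.mul_sum]
  refine Finset.sum_le_sum fun j _ => ?_
  have hp := pOf_mem hN hs01 i j
  have h1 := relEnt_blkAvg_le hh hN i j hp
  rw [setIntegral_congr_fun (g := fun p : ℝ × ℝ => relEnt (h p.1 p.2) (pOf N s i j))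
    ((measurableSet_blk i).prod (measurableSet_blk j))
    (fun p hp => by simp only [blockGraphon_eq hN hs i j hp])]
  split_ifs with hij
  · exact (relEnt_nonneg (blkAvg_mem hh hN i j) hp).trans h1
  · simpa [qMat, hij] using h1

/-- Convergence of the relative entropies. Since `h` takes values in `[0,1]`, the difference of the
integrands is bounded by the differences of `log r` and of `log (1 - r)`. -/
lemma tendsto_Ir {r : ℝ → ℝ → ℝ} (hr : GraphonAssump r) {rN : ℕ → ℝ → ℝ → ℝ}
    (hrN : SeqAssump r rN) (hh : IsGraphon h) :
    Tendsto (fun N => Ir (rN N) h) atTop (nhds (Ir r h)) := by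
  obtain ⟨-, hr01, hl1, hl2⟩ := hr
  obtain ⟨-, hblk, hrN01, -, -, ht1, ht2⟩ := hrN
  have hS : MeasurableSet (UI ×ˢ UI) := measurableSet_UI.prod measurableSet_UI
  rw [tendsto_iff_norm_sub_tendsto_zero]
  have ht := ht1.add ht2
  rw [add_zero] at ht
  refine squeeze_zero' (Eventually.of_forall fun N => norm_nonneg _) ?_ ht
  filter_upwards [eventually_gt_atTop 0] with N hN
  have b1 := integrableOn_blockGraphon hN (hblk N) Real.log
  have b2 := integrableOn_blockGraphon hN (hblk N) fun t => Real.log (1 - t)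
  have hi1 := integrableOn_relEnt hh hS (s := fun p => rN N p.1 p.2)
    (fun p hp => hrN01 N _ hp.1 _ hp.2) b1 b2
  have hi2 := integrableOn_relEnt hh hS (s := fun p => r p.1 p.2)
    (fun p hp => hr01 _ hp.1 _ hp.2) hl1 hl2
  have d1 := (b1.sub hl1).abs
  have d2 := (b2.sub hl2).abs
  simp only [Pi.sub_apply] at d1 d2
  rw [Ir, Ir, ← integral_sub hi1 hi2, ← integral_add d1 d2]
  refine norm_integral_le_of_norm_le (d1.add d2) (ae_restrict_of_forall_mem hS fun p hp => ?_)
  have h01 := hh.2.2 p.1 p.2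
  have h1 : relEnt (h p.1 p.2) (rN N p.1 p.2) - relEnt (h p.1 p.2) (r p.1 p.2)
      = -(h p.1 p.2 * (Real.log (rN N p.1 p.2) - Real.log (r p.1 p.2)))
        - (1 - h p.1 p.2) * (Real.log (1 - rN N p.1 p.2) - Real.log (1 - r p.1 p.2)) := by
    rw [relEnt_eq _ (hrN01 N _ hp.1 _ hp.2), relEnt_eq _ (hr01 _ hp.1 _ hp.2)]
    ring
  rw [h1, Real.norm_eq_abs]
  refine (abs_sub _ _).trans (add_le_add ?_ ?_)
  · rw [abs_neg, abs_mul, abs_of_nonneg h01.1]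
    exact mul_le_of_le_one_left (abs_nonneg _) h01.2
  · rw [abs_mul, abs_of_nonneg (by linarith [h01.2])]
    exact mul_le_of_le_one_left (abs_nonneg _) (by linarith [h01.1])

end Entropy

/-! ### The lower bound -/

/-- On the good event the Laplacian norm of the empirical graphon is close to that of `h`. -/
lemma lapNorm_le_of_good {N : ℕ} {h : ℝ → ℝ → ℝ} (hh : IsGraphon h) (hN : 0 < N) {ε : ℝ}
    (hε : 0 < ε) {ω : Edge N → Bool} (hω : Good (qMat N h) ε ω) :
    lapNorm (empGraphon N (adjEquiv N ω)) ≤ lapNorm h + 3 * ε := by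
  have hN' : (0:ℝ) < N := Nat.cast_pos.2 hN
  have hΛ := lapNorm_nonneg h
  have hpm := isProbMat_qMat hh hN
  have hasymm : ∀ i j, ind (edgeVal ω i j) = ind (edgeVal ω j i) := fun i j => by
    rw [edgeVal_symm]
  have hD : ∀ v : Fin N → ℝ, ∑ i, ∑ j, ind (edgeVal ω i j) * (v i - v j) ^ 2
      ≤ 2 * ((lapNorm h + 3 * ε) * N) * ∑ i, v i ^ 2 :=
    dirichlet_perturb (fun i j => ind (edgeVal ω i j)) (qMat N h) (cen_symm hpm ω)
      (Λ := (lapNorm h + ε) * N) (δ := ε * N) (by positivity)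
      (dirichlet_blkAvg hh hN (by linarith) (by linarith)) hω.1 hω.2 (by linarith)
  refine lapNorm_empGraphon_le hN _ (by linarith) ?_ ?_
  · exact row_le_of_dirichlet _ hasymm (fun i => by simp [edgeVal_self, ind]) hD
  · exact laplacian_sq_le _ hasymm (fun i j => by rw [ind]; split_ifs <;> norm_num)
      (by positivity) hD

/-- **Lower bound in the downward LDP via change of measure.** -/
theorem downward_lower_bound
    (r : ℝ → ℝ → ℝ) (hr : GraphonAssump r)
    (rN : ℕ → ℝ → ℝ → ℝ) (hrN : SeqAssump r rN)
    (β : ℝ) (hβ : β ∈ Set.Icc 0 (lapNorm r))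
    (h : ℝ → ℝ → ℝ) (hh : IsGraphon h) (hhβ : lapNorm h < β) :
    -(Ir r h) ≤ Filter.liminf (fun N : ℕ =>
        2 / (N : ℝ) ^ 2 *
          Real.log (errgProb N (pOf N (rN N))
            {A : AdjMat N | lapNorm (empGraphon N A) < β})) atTop := by
  classical
  obtain ⟨ε, hε0, hε1, hεβ⟩ : ∃ ε : ℝ, 0 < ε ∧ ε ≤ 1 ∧ lapNorm h + 3 * ε < β :=
    ⟨min 1 ((β - lapNorm h) / 4), lt_min one_pos (by linarith), min_le_left _ _, by
      have := min_le_right 1 ((β - lapNorm h) / 4)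
      linarith⟩
  let F : (N : ℕ) → Finset (Edge N → Bool) := fun N =>
    Finset.univ.filter fun ω => adjEquiv N ω ∈ {A : AdjMat N | lapNorm (empGraphon N A) < β}
  let Q : ℕ → ℝ := fun N => ∑ ω ∈ F N, ew (qMat N h) ω
  have hQlow : ∀ N : ℕ, 0 < N →
      1 - (N * Real.exp (-(ε ^ 2 / 4 * N)) + 2 / ε ^ 4 / N) ≤ Q N := by
    intro N hN
    have hpm := isProbMat_qMat hh hN
    refine (prob_good hN hpm hε0 hε1).trans ?_
    refine Finset.sum_le_sum_of_subset_of_nonneg (fun ω hω => ?_) fun ω _ _ => ew_nonneg hpm ω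
    simp only [F, Finset.mem_filter, Finset.mem_univ, true_and, mem_ofPred_eq] at hω ⊢
    exact (lapNorm_le_of_good hh hN hε0 hω).trans_lt hεβ
  have hQup : ∀ N : ℕ, 0 < N → Q N ≤ 1 := by
    intro N hN
    rw [← sum_ew (qMat N h)]
    exact Finset.sum_le_sum_of_subset_of_nonneg (Finset.subset_univ _)
      fun ω _ _ => ew_nonneg (isProbMat_qMat hh hN) ω
  have hNtop : Tendsto (fun N : ℕ => (N : ℝ)) atTop atTop := tendsto_natCast_atTop_atTop
  have hQ1 : Tendsto Q atTop (nhds 1) := by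
    have h1 : Tendsto (fun N : ℕ => (N : ℝ) * Real.exp (-(ε ^ 2 / 4 * N))) atTop (nhds 0) := by
      have h2 := (tendsto_rpow_mul_exp_neg_mul_atTop_nhds_zero 1 (ε ^ 2 / 4) (by positivity)).comp
        hNtop
      refine h2.congr fun N => ?_
      simp [Function.comp]
    have h2 : Tendsto (fun N : ℕ => 2 / ε ^ 4 / (N : ℝ)) atTop (nhds 0) :=
      tendsto_const_nhds.div_atTop hNtop
    have h3 := (h1.add h2).const_sub 1
    rw [add_zero, sub_zero] at h3
    refine tendsto_of_tendsto_of_tendsto_of_le_of_le' h3 tendsto_const_nhds ?_ ?_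
    · filter_upwards [eventually_gt_atTop 0] with N hN using hQlow N hN
    · filter_upwards [eventually_gt_atTop 0] with N hN using hQup N hN
  have hsq : Tendsto (fun N : ℕ => 2 / (N : ℝ) ^ 2) atTop (nhds 0) :=
    tendsto_const_nhds.div_atTop ((tendsto_pow_atTop two_ne_zero).comp hNtop)
  have hlim : Tendsto (fun N : ℕ => 2 / (N : ℝ) ^ 2 * Real.log (Q N)
      - (Ir (rN N) h + 2 / (N : ℝ) ^ 2) / Q N) atTop (nhds (-(Ir r h))) := by
    have h1 := (hsq.mul (hQ1.log one_ne_zero)).sub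
      (((tendsto_Ir hr hrN hh).add hsq).div hQ1 one_ne_zero)
    simpa using h1
  have hp : ∀ N : ℕ, 0 < N → ∀ e : Edge N, pOf N (rN N) e.1.1 e.1.2 ∈ Ioo (0:ℝ) 1 :=
    fun N hN e => pOf_mem hN (hrN.2.2.1 N) _ _
  rw [← hlim.liminf_eq]
  refine liminf_le_liminf ?_ hlim.isBoundedUnder_ge ?_
  · filter_upwards [eventually_gt_atTop 0, hQ1.eventually (lt_mem_nhds one_pos)] with N hN hQpos
    have hcm := change_of_measure (fun e : Edge N => qMat N h e.1.1 e.1.2)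
      (fun e : Edge N => pOf N (rN N) e.1.1 e.1.2) (fun e => (isProbMat_qMat hh hN).mem _ _)
      (hp N hN) (F N) hQpos
    have hent := entropy_le hh hN (hrN.1 N).1 (hrN.2.1 N) (hrN.2.2.1 N)
    set H := ∑ e : Edge N, relEnt (qMat N h e.1.1 e.1.2) (pOf N (rN N) e.1.1 e.1.2)
    have hN2 : (0:ℝ) < (N:ℝ) ^ 2 := by positivity
    rw [errgProb_eq]
    have h1 : 2 / (N : ℝ) ^ 2 * (H + 1) ≤ Ir (rN N) h + 2 / (N : ℝ) ^ 2 := by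
      have h2 : 2 / (N : ℝ) ^ 2 * H ≤ Ir (rN N) h := by
        rw [div_mul_eq_mul_div, div_le_iff₀ hN2]
        linarith
      linarith
    calc _ ≤ 2 / (N : ℝ) ^ 2 * Real.log (Q N) - 2 / (N : ℝ) ^ 2 * (H + 1) / Q N := by gcongr
      _ = 2 / (N : ℝ) ^ 2 * (Real.log (Q N) - (H + 1) / Q N) := by ring
      _ ≤ _ := mul_le_mul_of_nonneg_left hcm (by positivity)
  -- the logarithms of probabilities are nonpositive, so the `liminf` is not a junk value
  · refine IsBoundedUnder.isCoboundedUnder_ge ⟨0, ?_⟩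
    rw [eventually_map]
    filter_upwards [eventually_gt_atTop 0] with N hN
    refine mul_nonpos_of_nonneg_of_nonpos (by positivity) (Real.log_nonpos ?_ ?_)
    · rw [errgProb_eq]
      exact Finset.sum_nonneg fun ω _ => (bw_pos (hp N hN) ω).le
    · rw [errgProb_eq, ← sum_bw (fun e : Edge N => pOf N (rN N) e.1.1 e.1.2)]
      exact Finset.sum_le_sum_of_subset_of_nonneg (Finset.subset_univ _)
        fun ω _ _ => (bw_pos (hp N hN) ω).le
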